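/- arXiv:1802.05489 — 2 statements merged into one kernel-verified Lean document; each statement's English description precedes it below -/
import Mathlib

section
/- For every pair of measurable controls u₁ : [0,t_f] → [0,u₁max], u₂ : [0,t_f] → [0,u₂max] and every initial condition (R₀, C₀, P₀) with R₀, C₀, P₀ ≥ 0 and R₀+C₀+P₀ = N₀ > 0, there exists a unique absolutely continuous solution (R, C, P) : [0,t_f] → ℝ³ of the system R' = -λ₂R + λ₁C - γ(t)R + α₁u₁(t)P + α₂(β(t)+u₂(t))PR/N, C' = -λ₁C + λ₂R - γ(t)C + (1-α₂)(β(t)+u₂(t))PR/N + (1-α₁)u₁(t)P, P' = -(β(t)+u₂(t))PR/N - u₁(t)P + γ(t)(R+C), where N = R + C + P, with (R(0), C(0), P(0)) = (R₀, C₀, P₀), the equations holding almost everywhere; in particular the set of feasible pairs of the optimal control problem is non-empty. -/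
/-!
The right-hand sides of the three equations add up to zero, so a solution keeps the total
population `N = R + C + P` equal to `N0 > 0` (`IsSolution.sum_eq`). The denominator is therefore a
constant, and solutions correspond to solutions of the system with the quadratic vector field `vf`
(`isSolution_iff_of_sum_eq`), which is Lipschitz on bounded sets uniformly in time (`vf_lip`).

Existence: composing `vf` with the projection `clamp N0` onto the cube `[0, N0]³` makes it globally
Lipschitz, so the truncated system has a global solution by a weighted contraction argument
(`exists_integral_solution`). When a component is nonpositive its truncation is zero and its
derivative is nonnegative, so the components stay nonnegative (`nonneg_of_integral_eq`); their sum
is still `N0`, so they lie in `[0, N0]` and the truncation does nothing.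

Uniqueness: two solutions are continuous, hence bounded on `[0, t_f]`, and Grönwall's inequality in
integral form (`eq_zero_of_le_integral`) applies to the norm of their difference.
-/

open Set MeasureTheory

/-- Right-hand side of the `R` equation of the controlled system. -/
noncomputable def rhsR (lam1 lam2 a1 a2 : ℝ) (beta gam u1 u2 R C P : ℝ → ℝ) (s : ℝ) : ℝ :=
  -lam2 * R s + lam1 * C s - gam s * R s + a1 * u1 s * P s
    + a2 * (beta s + u2 s) * P s * R s / (R s + C s + P s)

/-- Right-hand side of the `C` equation of the controlled system. -/
noncomputable def rhsC (lam1 lam2 a1 a2 : ℝ) (beta gam u1 u2 R C P : ℝ → ℝ) (s : ℝ) : ℝ :=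
  -lam1 * C s + lam2 * R s - gam s * C s
    + (1 - a2) * (beta s + u2 s) * P s * R s / (R s + C s + P s)
    + (1 - a1) * u1 s * P s

/-- Right-hand side of the `P` equation of the controlled system. -/
noncomputable def rhsP (lam1 lam2 a1 a2 : ℝ) (beta gam u1 u2 R C P : ℝ → ℝ) (s : ℝ) : ℝ :=
  -(beta s + u2 s) * P s * R s / (R s + C s + P s) - u1 s * P s + gam s * (R s + C s)

/-- `(R, C, P)` is an absolutely continuous (Carathéodory) solution of the controlled
system on `[0, t_f]`: the states are continuous on `[0, t_f]` and satisfy the integral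
form of the equations (equivalently, the state equations hold almost everywhere). -/
noncomputable def IsSolution (t_f lam1 lam2 a1 a2 : ℝ) (beta gam u1 u2 R C P : ℝ → ℝ) : Prop :=
  ContinuousOn R (Icc 0 t_f) ∧ ContinuousOn C (Icc 0 t_f) ∧ ContinuousOn P (Icc 0 t_f) ∧
  (∀ t ∈ Icc (0:ℝ) t_f,
    R t = R 0 + ∫ s in (0:ℝ)..t, rhsR lam1 lam2 a1 a2 beta gam u1 u2 R C P s) ∧
  (∀ t ∈ Icc (0:ℝ) t_f,
    C t = C 0 + ∫ s in (0:ℝ)..t, rhsC lam1 lam2 a1 a2 beta gam u1 u2 R C P s) ∧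
  (∀ t ∈ Icc (0:ℝ) t_f,
    P t = P 0 + ∫ s in (0:ℝ)..t, rhsP lam1 lam2 a1 a2 beta gam u1 u2 R C P s)

/-! ### Integral equations -/

/-- Global Carathéodory existence for a vector field that is globally Lipschitz in the state:
no continuity in time is required, only integrability along continuous curves. The Picard map,
conjugated by the weight `exp (-μ t)`, is a contraction of `C([0, T], E)`, so that a single
fixed point covers all of `[0, T]`. -/
theorem exists_integral_solution {E : Type*} [NormedAddCommGroup E] [NormedSpace ℝ E]
    [CompleteSpace E] {T L : ℝ} (hT : 0 ≤ T) (hL : 0 ≤ L) (f : ℝ → E → E)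
    (hlip : ∀ s ∈ Icc 0 T, ∀ x y, ‖f s x - f s y‖ ≤ L * ‖x - y‖)
    (hint : ∀ x : ℝ → E, Continuous x →
      IntervalIntegrable (fun s => f s (x s)) volume 0 T) (x₀ : E) :
    ∃ x : ℝ → E, Continuous x ∧ ∀ t ∈ Icc 0 T, x t = x₀ + ∫ s in (0:ℝ)..t, f s (x s) := by
  -- The weighted Picard map has Lipschitz constant at most `L / μ`, and `L / (2 * L + 1) ≤ 1 / 2`.
  set μ : ℝ := 2 * L + 1 with hμ
  have hμ0 : 0 < μ := by positivity
  -- `lift y` undoes the weight; `y` is extended to `ℝ` by constants beyond the end points.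
  let lift : C(Icc (0:ℝ) T, E) → ℝ → E := fun y s => Real.exp (μ * s) • y (projIcc 0 T hT s)
  have hlift : ∀ y, Continuous (lift y) := fun y =>
    (by fun_prop : Continuous fun s : ℝ => Real.exp (μ * s)).smul
      (y.continuous.comp continuous_projIcc)
  have hint' : ∀ y, ∀ t ∈ Icc 0 T,
      IntervalIntegrable (fun s => f s (lift y s)) volume 0 t := fun y t ht =>
    (hint _ (hlift y)).mono_set (by
      rw [uIcc_of_le ht.1, uIcc_of_le hT]; exact Icc_subset_Icc_right ht.2)
  have hprim : ∀ y, ContinuousOn (fun t => ∫ s in (0:ℝ)..t, f s (lift y s)) (Icc 0 T) := by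
    intro y
    have := intervalIntegral.continuousOn_primitive_interval' (hint _ (hlift y))
      (left_mem_uIcc)
    rwa [uIcc_of_le hT] at this
  let G : C(Icc (0:ℝ) T, E) → C(Icc (0:ℝ) T, E) := fun y =>
    ⟨fun t => Real.exp (-(μ * t)) • (x₀ + ∫ s in (0:ℝ)..t, f s (lift y s)), by
      have := continuousOn_iff_continuous_domRestrict.1 (hprim y)
      exact (by fun_prop : Continuous fun t : Icc (0:ℝ) T => Real.exp (-(μ * (t:ℝ)))).smul
        (continuous_const.add this)⟩
  have hG : ContractingWith (1 / 2) G := by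
    refine ⟨by norm_num, LipschitzWith.of_dist_le_mul fun y z => ?_⟩
    rw [ContinuousMap.dist_le (by positivity)]
    rintro ⟨t, ht⟩
    have hbound : ‖(∫ s in (0:ℝ)..t, f s (lift y s)) - ∫ s in (0:ℝ)..t, f s (lift z s)‖
        ≤ ∫ s in (0:ℝ)..t, L * dist y z * Real.exp (μ * s) := by
      rw [← intervalIntegral.integral_sub (hint' y t ht) (hint' z t ht)]
      refine intervalIntegral.norm_integral_le_of_norm_le ht.1 (ae_of_all _ fun s hs => ?_)
        (Continuous.intervalIntegrable (by fun_prop) _ _)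
      refine (hlip s ⟨hs.1.le, hs.2.trans ht.2⟩ _ _).trans ?_
      have h1 : ‖lift y s - lift z s‖ ≤ Real.exp (μ * s) * dist y z := by
        simp only [lift, ← smul_sub, norm_smul, Real.norm_eq_abs, Real.abs_exp]
        gcongr
        rw [← dist_eq_norm]
        exact ContinuousMap.dist_apply_le_dist _
      calc _ ≤ L * (Real.exp (μ * s) * dist y z) := by gcongr
        _ = _ := by ring
    have hexp : ∫ s in (0:ℝ)..t, L * dist y z * Real.exp (μ * s)
        = L * dist y z * ((Real.exp (μ * t) - 1) / μ) := by
      rw [intervalIntegral.integral_const_mul,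
        intervalIntegral.integral_comp_mul_left (fun s => Real.exp s) hμ0.ne']
      simp
      ring_nf
      simp
    rw [hexp] at hbound
    have hd : dist (G y ⟨t, ht⟩) (G z ⟨t, ht⟩) = Real.exp (-(μ * t)) *
        ‖(∫ s in (0:ℝ)..t, f s (lift y s)) - ∫ s in (0:ℝ)..t, f s (lift z s)‖ := by
      simp only [G, ContinuousMap.coe_mk, dist_eq_norm, ← smul_sub, norm_smul,
        Real.norm_eq_abs, Real.abs_exp, add_sub_add_left_eq_sub]
    rw [hd]
    have hee : Real.exp (-(μ * t)) * Real.exp (μ * t) = 1 := by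
      rw [← Real.exp_add]; simp
    have hle : L / μ ≤ 1 / 2 := by
      rw [div_le_div_iff₀ hμ0 two_pos]; linarith
    calc _ ≤ Real.exp (-(μ * t)) * (L * dist y z * ((Real.exp (μ * t) - 1) / μ)) := by gcongr
      _ = L / μ * dist y z * (Real.exp (-(μ * t)) * Real.exp (μ * t) - Real.exp (-(μ * t))) := by
          ring
      _ ≤ L / μ * dist y z * 1 := by
          gcongr
          rw [hee]
          linarith [Real.exp_pos (-(μ * t))]
      _ ≤ 1 / 2 * dist y z := by rw [mul_one]; gcongr
      _ = _ := by norm_num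
  have : Nonempty (C(Icc (0:ℝ) T, E)) := ⟨0⟩
  have hfix : G (hG.fixedPoint G) = hG.fixedPoint G := hG.fixedPoint_isFixedPt
  refine ⟨lift (hG.fixedPoint G), hlift _, fun t ht => ?_⟩
  have h2 := DFunLike.congr_fun hfix ⟨t, ht⟩
  have h3 : lift (hG.fixedPoint G) t = Real.exp (μ * t) • (hG.fixedPoint G) ⟨t, ht⟩ := by
    simp only [lift, projIcc_of_mem hT ht]
  rw [h3, ← h2]
  simp only [G, ContinuousMap.coe_mk, smul_smul, ← Real.exp_add]
  simp

/-- Grönwall's inequality in integral form, with zero initial value. -/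
theorem eq_zero_of_le_integral {T L : ℝ} {d : ℝ → ℝ} (hL : 0 ≤ L)
    (hd : ContinuousOn d (Icc 0 T)) (h0 : ∀ t ∈ Icc 0 T, 0 ≤ d t)
    (h : ∀ t ∈ Icc 0 T, d t ≤ L * ∫ s in (0:ℝ)..t, d s) : ∀ t ∈ Icc 0 T, d t = 0 := by
  intro t ht
  have hT : 0 ≤ T := ht.1.trans ht.2
  -- A globally continuous extension of `d`, so that its primitive is differentiable everywhere.
  set e : ℝ → ℝ := IccExtend hT ((Icc 0 T).domRestrict d) with he
  have hec : Continuous e := (continuousOn_iff_continuous_domRestrict.1 hd).Icc_extend'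
  have hed : ∀ s ∈ Icc 0 T, e s = d s := fun s hs => by
    rw [he, IccExtend_of_mem hT _ hs]; rfl
  have hI : ∀ s ∈ Icc 0 T, ∫ r in (0:ℝ)..s, d r = ∫ r in (0:ℝ)..s, e r := fun s hs =>
    intervalIntegral.integral_congr fun r hr => by
      rw [uIcc_of_le hs.1] at hr
      exact (hed r ⟨hr.1, hr.2.trans hs.2⟩).symm
  have hder : ∀ s, HasDerivAt (fun s => ∫ r in (0:ℝ)..s, e r) (e s) s := fun s =>
    hec.integral_hasStrictDerivAt 0 s |>.hasDerivAt
  have hg := norm_le_gronwallBound_of_norm_deriv_right_le (f := fun s => ∫ r in (0:ℝ)..s, e r)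
    (f' := e) (δ := 0) (K := L) (ε := 0) (a := 0) (b := T)
    (fun s _ => (hder s).continuousAt.continuousWithinAt) (fun s _ => (hder s).hasDerivWithinAt)
    (by simp) (fun s hs => by
      have hs' : s ∈ Icc 0 T := ⟨hs.1, hs.2.le⟩
      rw [add_zero, hed s hs', Real.norm_of_nonneg (h0 s hs')]
      refine (h s hs').trans ?_
      rw [hI s hs']
      exact mul_le_mul_of_nonneg_left (le_abs_self _) hL) t ht
  have hz : ∫ r in (0:ℝ)..t, e r = 0 := by
    have : gronwallBound 0 L 0 (t - 0) = 0 := by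
      simp [gronwallBound_ε0]
    rw [this] at hg
    exact norm_le_zero_iff.1 hg
  have := h t ht
  rw [hI t ht, hz, mul_zero] at this
  exact le_antisymm this (h0 t ht)

/-- A primitive `x` of `g` with `x 0 ≥ 0` stays nonnegative if `g ≥ 0` wherever
`x ≤ 0`: after the last time at which `x ≥ 0` the function could only increase. -/
theorem nonneg_of_integral_eq {T : ℝ} {x g : ℝ → ℝ} (hx : ContinuousOn x (Icc 0 T))
    (h0 : 0 ≤ x 0) (hg : IntervalIntegrable g volume 0 T)
    (h : ∀ t ∈ Icc 0 T, x t = x 0 + ∫ s in (0:ℝ)..t, g s)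
    (hpos : ∀ t ∈ Icc 0 T, x t ≤ 0 → 0 ≤ g t) : ∀ t ∈ Icc 0 T, 0 ≤ x t := by
  intro t ht
  by_contra! hneg
  have hcont : ContinuousOn x (Icc 0 t) := hx.mono (Icc_subset_Icc_right ht.2)
  have hcpt : IsCompact (Icc 0 t ∩ x ⁻¹' Ici 0) :=
    isCompact_Icc.of_isClosed_subset (hcont.preimage_isClosed_of_isClosed isClosed_Icc isClosed_Ici)
      inter_subset_left
  obtain ⟨a, ⟨⟨ha0, hat⟩, hxa⟩, hmax⟩ := hcpt.exists_isGreatest ⟨0, ⟨le_rfl, ht.1⟩, h0⟩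
  have hT : 0 ≤ T := ht.1.trans ht.2
  have hsub : ∀ s ∈ Icc 0 T, IntervalIntegrable g volume 0 s := fun s hs => hg.mono_set (by
    rw [uIcc_of_le hs.1, uIcc_of_le hT]; exact Icc_subset_Icc_right hs.2)
  have haT : a ∈ Icc 0 T := ⟨ha0, hat.trans ht.2⟩
  have hdiff : x t - x a = ∫ s in a..t, g s := by
    rw [h t ht, h a haT, ← intervalIntegral.integral_interval_sub_left (hsub t ht) (hsub a haT)]
    ring
  have hnn : 0 ≤ ∫ s in a..t, g s := by
    rw [intervalIntegral.integral_of_le hat]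
    refine setIntegral_nonneg measurableSet_Ioc fun s hs => ?_
    refine hpos s ⟨ha0.trans hs.1.le, hs.2.trans ht.2⟩ ?_
    by_contra! hxs
    exact absurd (hmax ⟨⟨ha0.trans hs.1.le, hs.2⟩, hxs.le⟩) (not_le.2 hs.1)
  have hxa' : 0 ≤ x a := hxa
  linarith

/-! ### The system with frozen total population -/

/-- The vector field of the system at the state `x = (R, C, P)`, with the total population in the
denominator replaced by the constant `n`. The coefficient values at the given time are `g` for
`γ`, `v` for `u₁` and `w` for `β + u₂`. -/
noncomputable def vf (l1 l2 a1 a2 n g v w : ℝ) (x : ℝ × ℝ × ℝ) : ℝ × ℝ × ℝ :=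
  (-l2 * x.1 + l1 * x.2.1 - g * x.1 + a1 * v * x.2.2 + a2 * w * x.2.2 * x.1 / n,
   -l1 * x.2.1 + l2 * x.1 - g * x.2.1 + (1 - a2) * w * x.2.2 * x.1 / n + (1 - a1) * v * x.2.2,
   -w * x.2.2 * x.1 / n - v * x.2.2 + g * (x.1 + x.2.1))

/-- On the ball of radius `M` the quadratic vector field `vf` is Lipschitz, with a constant that
depends only on bounds for the coefficients. -/
theorem vf_lip {l1 l2 a1 a2 n g v w G V W M : ℝ} (hl1 : 0 ≤ l1) (hl2 : 0 ≤ l2)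
    (ha1 : a1 ∈ Icc (0:ℝ) 1) (ha2 : a2 ∈ Icc (0:ℝ) 1) (hn : 0 < n)
    (hg : g ∈ Icc 0 G) (hv : v ∈ Icc 0 V) (hw : w ∈ Icc 0 W)
    {x y : ℝ × ℝ × ℝ} (hx : ‖x‖ ≤ M) (hy : ‖y‖ ≤ M) :
    ‖vf l1 l2 a1 a2 n g v w x - vf l1 l2 a1 a2 n g v w y‖
      ≤ (l1 + l2 + 2 * G + V + W * (2 * M / n)) * ‖x - y‖ := by
  obtain ⟨r, c, p⟩ := x
  obtain ⟨r', c', p'⟩ := y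
  set d := ‖(r, c, p) - (r', c', p')‖ with hd
  have hd0 : 0 ≤ d := norm_nonneg _
  have hr : |r - r'| ≤ d := norm_fst_le ((r, c, p) - (r', c', p'))
  have hcp := norm_snd_le ((r, c, p) - (r', c', p'))
  have hc : |c - c'| ≤ d := (norm_fst_le ((r, c, p) - (r', c', p')).2).trans hcp
  have hp : |p - p'| ≤ d := (norm_snd_le ((r, c, p) - (r', c', p')).2).trans hcp
  have hr' : |r'| ≤ M := (norm_fst_le (r', c', p')).trans hy
  have hp' : |p| ≤ M := ((norm_snd_le (r, c, p).2).trans (norm_snd_le (r, c, p))).trans hx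
  have hM : 0 ≤ M := (abs_nonneg _).trans hr'
  have hG : 0 ≤ G := hg.1.trans hg.2
  have hV : 0 ≤ V := hv.1.trans hv.2
  have hW : 0 ≤ W := hw.1.trans hw.2
  set q := (p * r - p' * r') / n with hq
  have hqb : |q| ≤ 2 * M / n * d := by
    rw [hq, abs_div, abs_of_pos hn, div_mul_eq_mul_div]
    gcongr
    calc |p * r - p' * r'| = |p * (r - r') + (p - p') * r'| := by ring_nf
      _ ≤ |p| * |r - r'| + |p - p'| * |r'| := by
          rw [← abs_mul, ← abs_mul]; exact abs_add_le _ _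
      _ ≤ M * d + d * M := by gcongr
      _ = 2 * M * d := by ring
  have key : ∀ {k K z Z : ℝ}, k ∈ Icc 0 K → |z| ≤ Z → |k * z| ≤ K * Z := by
    intro k K z Z hk hz
    rw [abs_mul, abs_of_nonneg hk.1]
    exact mul_le_mul hk.2 hz (abs_nonneg _) (hk.1.trans hk.2)
  have unit : ∀ {a k K : ℝ}, a ∈ Icc (0:ℝ) 1 → k ∈ Icc 0 K → a * k ∈ Icc 0 K := by
    intro a k K ha hk
    exact ⟨mul_nonneg ha.1 hk.1, (mul_le_of_le_one_left hk.1 ha.2).trans hk.2⟩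
  have ha1' : 1 - a1 ∈ Icc (0:ℝ) 1 := ⟨by linarith [ha1.2], by linarith [ha1.1]⟩
  have ha2' : 1 - a2 ∈ Icc (0:ℝ) 1 := ⟨by linarith [ha2.2], by linarith [ha2.1]⟩
  have e1 := abs_le.1 (key ⟨hl1, le_rfl⟩ hc)
  have e2 := abs_le.1 (key ⟨hl2, le_rfl⟩ hr)
  have e3 := abs_le.1 (key hg hr)
  have e4 := abs_le.1 (key hg hc)
  have e5 := abs_le.1 (key (unit ha1 hv) hp)
  have e6 := abs_le.1 (key (unit ha1' hv) hp)
  have e7 := abs_le.1 (key hv hp)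
  have e8 := abs_le.1 (key (unit ha2 hw) hqb)
  have e9 := abs_le.1 (key (unit ha2' hw) hqb)
  have e10 := abs_le.1 (key hw hqb)
  have p1 : 0 ≤ l1 * d := by positivity
  have p2 : 0 ≤ l2 * d := by positivity
  have p3 : 0 ≤ G * d := by positivity
  have p4 : 0 ≤ V * d := by positivity
  have expand : (l1 + l2 + 2 * G + V + W * (2 * M / n)) * d
      = l1 * d + l2 * d + 2 * (G * d) + V * d + W * (2 * M / n * d) := by ring
  rw [expand]
  have c1 : (vf l1 l2 a1 a2 n g v w (r, c, p)).1 - (vf l1 l2 a1 a2 n g v w (r', c', p')).1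
      = -(l2 * (r - r')) + l1 * (c - c') - g * (r - r') + a1 * v * (p - p') + a2 * w * q := by
    simp only [vf, hq]; ring
  have c2 : (vf l1 l2 a1 a2 n g v w (r, c, p)).2.1 - (vf l1 l2 a1 a2 n g v w (r', c', p')).2.1
      = -(l1 * (c - c')) + l2 * (r - r') - g * (c - c') + (1 - a2) * w * q
        + (1 - a1) * v * (p - p') := by
    simp only [vf, hq]; ring
  have c3 : (vf l1 l2 a1 a2 n g v w (r, c, p)).2.2 - (vf l1 l2 a1 a2 n g v w (r', c', p')).2.2
      = -(w * q) - v * (p - p') + g * (r - r') + g * (c - c') := by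
    simp only [vf, hq]; ring
  refine norm_prod_le_iff.2 ⟨?_, norm_prod_le_iff.2 ⟨?_, ?_⟩⟩
  · rw [Prod.fst_sub, c1, Real.norm_eq_abs, abs_le]
    constructor <;> linarith [e1.1, e1.2, e2.1, e2.2, e3.1, e3.2, e5.1, e5.2, e8.1, e8.2]
  · rw [Prod.snd_sub, Prod.fst_sub, c2, Real.norm_eq_abs, abs_le]
    constructor <;> linarith [e1.1, e1.2, e2.1, e2.2, e4.1, e4.2, e6.1, e6.2, e9.1, e9.2]
  · rw [Prod.snd_sub, Prod.snd_sub, c3, Real.norm_eq_abs, abs_le]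
    constructor <;> linarith [e3.1, e3.2, e4.1, e4.2, e7.1, e7.2, e10.1, e10.2]

/-- The three right-hand sides are integrable along continuous curves as long as the denominator
`N` does not vanish. The denominator is a parameter so that this covers both the original system
and the one with constant denominator. -/
theorem integrable_components (l1 l2 a1 a2 : ℝ) {a b : ℝ} {g v w R C P N : ℝ → ℝ}
    (hg : IntervalIntegrable g volume a b) (hv : IntervalIntegrable v volume a b)
    (hw : IntervalIntegrable w volume a b) (hR : ContinuousOn R (uIcc a b))
    (hC : ContinuousOn C (uIcc a b)) (hP : ContinuousOn P (uIcc a b))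
    (hN : ContinuousOn N (uIcc a b)) (hN0 : ∀ s ∈ uIcc a b, N s ≠ 0) :
    IntervalIntegrable (fun s => -l2 * R s + l1 * C s - g s * R s + a1 * v s * P s
      + a2 * w s * P s * R s / N s) volume a b ∧
    IntervalIntegrable (fun s => -l1 * C s + l2 * R s - g s * C s
      + (1 - a2) * w s * P s * R s / N s + (1 - a1) * v s * P s) volume a b ∧
    IntervalIntegrable (fun s => -w s * P s * R s / N s - v s * P s + g s * (R s + C s))
      volume a b := by
  have iR := hR.intervalIntegrable (μ := volume)
  have iC := hC.intervalIntegrable (μ := volume)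
  have gR := hg.mul_continuousOn hR
  have gC := hg.mul_continuousOn hC
  have vP := hv.mul_continuousOn hP
  have wm := hw.mul_continuousOn ((hP.mul hR).div hN hN0)
  refine ⟨?_, ?_, ?_⟩
  · convert ((((iR.const_mul (-l2)).add (iC.const_mul l1)).sub gR).add (vP.const_mul a1)).add
      (wm.const_mul a2) using 2
    simp only [Pi.mul_apply, Pi.div_apply]; ring
  · convert ((((iC.const_mul (-l1)).add (iR.const_mul l2)).sub gC).add
      (wm.const_mul (1 - a2))).add (vP.const_mul (1 - a1)) using 2
    simp only [Pi.mul_apply, Pi.div_apply]; ring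
  · convert ((wm.const_mul (-1)).sub vP).add (gR.add gC) using 2
    simp only [Pi.mul_apply, Pi.div_apply]; ring

/-- Every solution conserves the total population. Nothing is assumed about the denominator
`N = R + C + P` away from time `0`: where `N` vanishes the division takes a junk value and the
right-hand sides may fail to be integrable. Up to its first zero `N` is constant, hence by the
intermediate value theorem that zero does not exist. -/
theorem IsSolution.sum_eq {T l1 l2 a1 a2 : ℝ} {beta gam u1 u2 R C P : ℝ → ℝ}
    (hT : 0 ≤ T)
    (hg : IntervalIntegrable gam volume 0 T) (hv : IntervalIntegrable u1 volume 0 T)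
    (hw : IntervalIntegrable (fun s => beta s + u2 s) volume 0 T)
    (h : IsSolution T l1 l2 a1 a2 beta gam u1 u2 R C P) (h0 : 0 < R 0 + C 0 + P 0) :
    ∀ t ∈ Icc 0 T, R t + C t + P t = R 0 + C 0 + P 0 := by
  obtain ⟨cR, cC, cP, eR, eC, eP⟩ := h
  have cN : ContinuousOn (fun s => R s + C s + P s) (Icc 0 T) := (cR.add cC).add cP
  have step : ∀ t ∈ Icc 0 T, (∀ s ∈ Icc 0 t, R s + C s + P s ≠ 0) →
      R t + C t + P t = R 0 + C 0 + P 0 := by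
    intro t ht hne
    have hsub : uIcc 0 t ⊆ Icc 0 T := by
      rw [uIcc_of_le ht.1]; exact Icc_subset_Icc_right ht.2
    have hsub' : uIcc 0 t ⊆ uIcc 0 T := by rwa [uIcc_of_le hT]
    obtain ⟨iR, iC, iP⟩ :
        IntervalIntegrable (rhsR l1 l2 a1 a2 beta gam u1 u2 R C P) volume 0 t ∧
        IntervalIntegrable (rhsC l1 l2 a1 a2 beta gam u1 u2 R C P) volume 0 t ∧
        IntervalIntegrable (rhsP l1 l2 a1 a2 beta gam u1 u2 R C P) volume 0 t :=
      integrable_components l1 l2 a1 a2 (hg.mono_set hsub')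
      (hv.mono_set hsub') (hw.mono_set hsub') (cR.mono hsub) (cC.mono hsub) (cP.mono hsub)
      (cN.mono hsub) (by rwa [uIcc_of_le ht.1])
    have hz : (∫ s in (0:ℝ)..t, rhsR l1 l2 a1 a2 beta gam u1 u2 R C P s)
        + (∫ s in (0:ℝ)..t, rhsC l1 l2 a1 a2 beta gam u1 u2 R C P s)
        + (∫ s in (0:ℝ)..t, rhsP l1 l2 a1 a2 beta gam u1 u2 R C P s) = 0 := by
      rw [← intervalIntegral.integral_add iR iC, ← intervalIntegral.integral_add (iR.add iC) iP]
      refine intervalIntegral.integral_zero_ae (ae_of_all _ fun s _ => ?_)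
      simp only [rhsR, rhsC, rhsP]; ring
    linarith [eR t ht, eC t ht, eP t ht]
  intro t ht
  refine step t ht fun s hs hs0 => ?_
  have hcs : ContinuousOn (fun s => R s + C s + P s) (Icc 0 t) :=
    cN.mono (Icc_subset_Icc_right ht.2)
  have hcpt : IsCompact (Icc 0 t ∩ (fun s => R s + C s + P s) ⁻¹' {0}) :=
    isCompact_Icc.of_isClosed_subset
      (hcs.preimage_isClosed_of_isClosed isClosed_Icc isClosed_singleton) inter_subset_left
  -- `b` is the first zero of `N`, and `c < b` is a time at which `N` has half its initial value.
  obtain ⟨b, ⟨⟨hb0, hbt⟩, hNb⟩, hmin⟩ := hcpt.exists_isLeast ⟨s, hs, hs0⟩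
  have hNb' : R b + C b + P b = 0 := hNb
  obtain ⟨c, hc, hNc⟩ := intermediate_value_Icc' hb0 (hcs.mono (Icc_subset_Icc_right hbt))
    (show (R 0 + C 0 + P 0) / 2 ∈ Icc (R b + C b + P b) (R 0 + C 0 + P 0) from
      ⟨by linarith, by linarith⟩)
  have hNc' : R c + C c + P c = (R 0 + C 0 + P 0) / 2 := hNc
  have hcb : c < b := lt_of_le_of_ne hc.2 (by rintro rfl; linarith)
  have := step c ⟨hc.1, hc.2.trans (hbt.trans ht.2)⟩ fun r hr hr0 =>
    absurd (hmin ⟨⟨hr.1, hr.2.trans (hcb.le.trans hbt)⟩, hr0⟩) (not_le.2 (hr.2.trans_lt hcb))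
  linarith

/-! ### Truncation -/

/-- Componentwise projection of `ℝ³` onto the cube `[0, n]³` (for `0 ≤ n`). -/
noncomputable def clamp (n : ℝ) (x : ℝ × ℝ × ℝ) : ℝ × ℝ × ℝ :=
  (max 0 (min x.1 n), max 0 (min x.2.1 n), max 0 (min x.2.2 n))

theorem continuous_clamp (n : ℝ) : Continuous (clamp n) := by
  unfold clamp; fun_prop

theorem norm_clamp_le {n : ℝ} (hn : 0 ≤ n) (x : ℝ × ℝ × ℝ) : ‖clamp n x‖ ≤ n := by
  have h : ∀ r : ℝ, ‖max 0 (min r n)‖ ≤ n := fun r => by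
    rw [Real.norm_of_nonneg (le_max_left _ _)]
    exact max_le hn (min_le_right _ _)
  exact norm_prod_le_iff.2 ⟨h _, norm_prod_le_iff.2 ⟨h _, h _⟩⟩

theorem norm_clamp_sub_le (n : ℝ) (x y : ℝ × ℝ × ℝ) : ‖clamp n x - clamp n y‖ ≤ ‖x - y‖ := by
  have h : ∀ r s : ℝ, ‖max 0 (min r n) - max 0 (min s n)‖ ≤ ‖r - s‖ := fun r s => by
    have h1 := abs_max_sub_max_le_abs (min r n) (min s n) 0
    rw [max_comm _ 0, max_comm _ 0] at h1
    refine h1.trans ((abs_min_sub_min_le_max r n s n).trans ?_)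
    simp
  refine norm_prod_le_iff.2 ⟨(h _ _).trans (norm_fst_le (x - y)), norm_prod_le_iff.2 ⟨?_, ?_⟩⟩
  · exact (h _ _).trans ((norm_fst_le (x - y).2).trans (norm_snd_le (x - y)))
  · exact (h _ _).trans ((norm_snd_le (x - y).2).trans (norm_snd_le (x - y)))

theorem clamp_of_mem {n : ℝ} {x : ℝ × ℝ × ℝ} (h1 : x.1 ∈ Icc 0 n) (h2 : x.2.1 ∈ Icc 0 n)
    (h3 : x.2.2 ∈ Icc 0 n) : clamp n x = x := by
  simp only [clamp, min_eq_left h1.2, min_eq_left h2.2, min_eq_left h3.2, max_eq_right h1.1,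
    max_eq_right h2.1, max_eq_right h3.1]

/-! ### The system in vector form -/

theorem intervalIntegral_prod3 {a b : ℝ} {f : ℝ → ℝ × ℝ × ℝ}
    (hf : IntervalIntegrable f volume a b) :
    ∫ s in a..b, f s = (∫ s in a..b, (f s).1, ∫ s in a..b, (f s).2.1, ∫ s in a..b, (f s).2.2) := by
  refine Prod.ext ?_ (Prod.ext ?_ ?_)
  · exact ((ContinuousLinearMap.fst ℝ ℝ (ℝ × ℝ)).intervalIntegral_comp_comm hf).symm
  · exact (((ContinuousLinearMap.fst ℝ ℝ ℝ).comp
      (ContinuousLinearMap.snd ℝ ℝ (ℝ × ℝ))).intervalIntegral_comp_comm hf).symm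
  · exact (((ContinuousLinearMap.snd ℝ ℝ ℝ).comp
      (ContinuousLinearMap.snd ℝ ℝ (ℝ × ℝ))).intervalIntegral_comp_comm hf).symm

theorem intervalIntegrable_vf (l1 l2 a1 a2 : ℝ) {n a b : ℝ} {g v w : ℝ → ℝ}
    {x : ℝ → ℝ × ℝ × ℝ} (hn : n ≠ 0)
    (hg : IntervalIntegrable g volume a b) (hv : IntervalIntegrable v volume a b)
    (hw : IntervalIntegrable w volume a b) (hx : ContinuousOn x (uIcc a b)) :
    IntervalIntegrable (fun s => vf l1 l2 a1 a2 n (g s) (v s) (w s) (x s)) volume a b := by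
  obtain ⟨i1, i2, i3⟩ := integrable_components l1 l2 a1 a2 (N := fun _ => n) hg hv hw
    hx.fst hx.snd.fst hx.snd.snd continuousOn_const (fun _ _ => hn)
  exact ⟨i1.1.prodMk (i2.1.prodMk i3.1), i1.2.prodMk (i2.2.prodMk i3.2)⟩

/-- On curves of constant total population `n`, being a solution is the integral equation for the
vector field `vf` with denominator `n`. -/
theorem isSolution_iff_of_sum_eq {T l1 l2 a1 a2 n : ℝ} {beta gam u1 u2 R C P : ℝ → ℝ}
    (hT : 0 ≤ T) (hn : n ≠ 0)
    (hg : IntervalIntegrable gam volume 0 T) (hv : IntervalIntegrable u1 volume 0 T)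
    (hw : IntervalIntegrable (fun s => beta s + u2 s) volume 0 T)
    (hR : ContinuousOn R (Icc 0 T)) (hC : ContinuousOn C (Icc 0 T))
    (hP : ContinuousOn P (Icc 0 T)) (hsum : ∀ t ∈ Icc 0 T, R t + C t + P t = n) :
    IsSolution T l1 l2 a1 a2 beta gam u1 u2 R C P ↔
      ∀ t ∈ Icc 0 T, (R t, C t, P t) = (R 0, C 0, P 0) + ∫ s in (0:ℝ)..t,
        vf l1 l2 a1 a2 n (gam s) (u1 s) (beta s + u2 s) (R s, C s, P s) := by
  have hint : ∀ t ∈ Icc 0 T, ∫ s in (0:ℝ)..t,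
        vf l1 l2 a1 a2 n (gam s) (u1 s) (beta s + u2 s) (R s, C s, P s) =
      (∫ s in (0:ℝ)..t, rhsR l1 l2 a1 a2 beta gam u1 u2 R C P s,
        ∫ s in (0:ℝ)..t, rhsC l1 l2 a1 a2 beta gam u1 u2 R C P s,
        ∫ s in (0:ℝ)..t, rhsP l1 l2 a1 a2 beta gam u1 u2 R C P s) := by
    intro t ht
    have hsub : uIcc 0 t ⊆ Icc 0 T := by
      rw [uIcc_of_le ht.1]; exact Icc_subset_Icc_right ht.2
    have hsub' : uIcc 0 t ⊆ uIcc 0 T := by rwa [uIcc_of_le hT]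
    rw [intervalIntegral_prod3 (intervalIntegrable_vf l1 l2 a1 a2 hn (hg.mono_set hsub')
      (hv.mono_set hsub') (hw.mono_set hsub') ((hR.prodMk (hC.prodMk hP)).mono hsub))]
    refine Prod.ext ?_ (Prod.ext ?_ ?_) <;>
    · refine intervalIntegral.integral_congr fun s hs => ?_
      simp only [vf, rhsR, rhsC, rhsP, hsum s (hsub hs)]
  constructor
  · rintro ⟨-, -, -, eR, eC, eP⟩ t ht
    rw [hint t ht]
    exact Prod.ext (eR t ht) (Prod.ext (eC t ht) (eP t ht))
  · intro h
    refine ⟨hR, hC, hP, fun t ht => ?_, fun t ht => ?_, fun t ht => ?_⟩ <;>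
      have := h t ht <;> rw [hint t ht] at this
    · exact congrArg Prod.fst this
    · exact congrArg (fun z => z.2.1) this
    · exact congrArg (fun z => z.2.2) this

/-! ### Existence and uniqueness -/

/-- For every admissible measurable control pair and every initial condition on the simplex,
there is a unique absolutely continuous solution of the controlled system on `[0, t_f]`;
in particular the set of feasible pairs of the optimal control problem is non-empty. -/
theorem existence_uniqueness_of_solution
    (t_f lam1 lam2 a1 a2 u1max u2max R0 C0 P0 N0 : ℝ)
    (ht_f : 0 < t_f)
    (hlam1 : 0 ≤ lam1) (hlam2 : 0 ≤ lam2)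
    (ha1 : a1 ∈ Icc (0:ℝ) 1) (ha2 : a2 ∈ Icc (0:ℝ) 1)
    (beta gam u1 u2 : ℝ → ℝ)
    (hbeta_cont : ContinuousOn beta (Icc 0 t_f))
    (hbeta_nonneg : ∀ t ∈ Icc (0:ℝ) t_f, 0 ≤ beta t)
    (hgam_cont : ContinuousOn gam (Icc 0 t_f))
    (hgam_nonneg : ∀ t ∈ Icc (0:ℝ) t_f, 0 ≤ gam t)
    (hu1_meas : Measurable u1) (hu2_meas : Measurable u2)
    (hu1_range : ∀ t ∈ Icc (0:ℝ) t_f, u1 t ∈ Icc 0 u1max)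
    (hu2_range : ∀ t ∈ Icc (0:ℝ) t_f, u2 t ∈ Icc 0 u2max)
    (hR0 : 0 ≤ R0) (hC0 : 0 ≤ C0) (hP0 : 0 ≤ P0)
    (hsum : R0 + C0 + P0 = N0) (hN0 : 0 < N0) :
    ∃ R C P : ℝ → ℝ,
      (IsSolution t_f lam1 lam2 a1 a2 beta gam u1 u2 R C P ∧
        R 0 = R0 ∧ C 0 = C0 ∧ P 0 = P0) ∧
      ∀ R' C' P' : ℝ → ℝ,
        (IsSolution t_f lam1 lam2 a1 a2 beta gam u1 u2 R' C' P' ∧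
          R' 0 = R0 ∧ C' 0 = C0 ∧ P' 0 = P0) →
        ∀ t ∈ Icc (0:ℝ) t_f, R' t = R t ∧ C' t = C t ∧ P' t = P t := by
  have hT : 0 ≤ t_f := ht_f.le
  have huIcc : uIcc 0 t_f = Icc 0 t_f := uIcc_of_le hT
  have h0mem : (0:ℝ) ∈ Icc 0 t_f := ⟨le_rfl, hT⟩
  have hmeas : ∀ {u : ℝ → ℝ} {U : ℝ}, Measurable u → (∀ t ∈ Icc 0 t_f, u t ∈ Icc 0 U) →
      IntervalIntegrable u volume 0 t_f := by
    intro u U hu hU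
    rw [intervalIntegrable_iff_integrableOn_Icc_of_le hT]
    refine Measure.integrableOn_of_bounded (M := U) (by simp) hu.aestronglyMeasurable
      ((ae_restrict_iff' measurableSet_Icc).2 (ae_of_all _ fun t ht => ?_))
    rw [Real.norm_of_nonneg (hU t ht).1]
    exact (hU t ht).2
  have hg : IntervalIntegrable gam volume 0 t_f :=
    ContinuousOn.intervalIntegrable (by rwa [huIcc])
  have hv : IntervalIntegrable u1 volume 0 t_f := hmeas hu1_meas hu1_range
  have hw : IntervalIntegrable (fun s => beta s + u2 s) volume 0 t_f :=
    (ContinuousOn.intervalIntegrable (by rwa [huIcc])).add (hmeas hu2_meas hu2_range)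
  obtain ⟨G, hG⟩ := isCompact_Icc.exists_bound_of_continuousOn hgam_cont
  obtain ⟨B, hB⟩ := isCompact_Icc.exists_bound_of_continuousOn hbeta_cont
  have hgb : ∀ t ∈ Icc 0 t_f, gam t ∈ Icc 0 G := fun t ht =>
    ⟨hgam_nonneg t ht, (le_abs_self _).trans (hG t ht)⟩
  have hwb : ∀ t ∈ Icc 0 t_f, beta t + u2 t ∈ Icc 0 (B + u2max) := fun t ht =>
    ⟨add_nonneg (hbeta_nonneg t ht) (hu2_range t ht).1,
      add_le_add ((le_abs_self _).trans (hB t ht)) (hu2_range t ht).2⟩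
  let F : ℝ → ℝ × ℝ × ℝ → ℝ × ℝ × ℝ := fun s x =>
    vf lam1 lam2 a1 a2 N0 (gam s) (u1 s) (beta s + u2 s) x
  -- `Lc M` is a Lipschitz constant of `F s` on the ball of radius `M`, uniform in `s`.
  let Lc : ℝ → ℝ := fun M => lam1 + lam2 + 2 * G + u1max + (B + u2max) * (2 * M / N0)
  have hLc : ∀ M, 0 ≤ M → 0 ≤ Lc M := fun M hM => by
    have h1 : 0 ≤ G := (hgb 0 h0mem).1.trans (hgb 0 h0mem).2
    have h2 : 0 ≤ u1max := (hu1_range 0 h0mem).1.trans (hu1_range 0 h0mem).2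
    have h3 : 0 ≤ B + u2max := (hwb 0 h0mem).1.trans (hwb 0 h0mem).2
    positivity
  have hF : ∀ M, ∀ s ∈ Icc 0 t_f, ∀ x y, ‖x‖ ≤ M → ‖y‖ ≤ M →
      ‖F s x - F s y‖ ≤ Lc M * ‖x - y‖ := fun M s hs x y hx hy =>
    vf_lip hlam1 hlam2 ha1 ha2 hN0 (hgb s hs) (hu1_range s hs) (hwb s hs) hx hy
  have hFint : ∀ x : ℝ → ℝ × ℝ × ℝ, ContinuousOn x (Icc 0 t_f) → ∀ t ∈ Icc 0 t_f,
      IntervalIntegrable (fun s => F s (x s)) volume 0 t := by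
    intro x hx t ht
    refine (intervalIntegrable_vf lam1 lam2 a1 a2 hN0.ne' hg hv hw (by rwa [huIcc])).mono_set ?_
    rw [uIcc_of_le ht.1, huIcc]; exact Icc_subset_Icc_right ht.2
  have hTmem : t_f ∈ Icc 0 t_f := ⟨hT, le_rfl⟩
  -- `x` solves the truncated system; it remains in the simplex, where the truncation is inactive.
  obtain ⟨x, hxc, hx⟩ := exists_integral_solution hT (hLc N0 hN0.le)
    (fun s z => F s (clamp N0 z))
    (fun s hs y z => (hF N0 s hs _ _ (norm_clamp_le hN0.le y) (norm_clamp_le hN0.le z)).trans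
      (mul_le_mul_of_nonneg_left (norm_clamp_sub_le N0 y z) (hLc N0 hN0.le)))
    (fun y hy => hFint _ ((continuous_clamp N0).comp hy).continuousOn t_f hTmem) (R0, C0, P0)
  have hx0 : x 0 = (R0, C0, P0) := by simpa using hx 0 h0mem
  have hci : ∀ t ∈ Icc 0 t_f, IntervalIntegrable (fun s => F s (clamp N0 (x s))) volume 0 t :=
    hFint _ ((continuous_clamp N0).comp hxc).continuousOn
  have hcomp := fun t ht => (hx t ht).trans
    (congrArg (fun z => (R0, C0, P0) + z) (intervalIntegral_prod3 (hci t ht)))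
  have hclamp0 : ∀ r : ℝ, r ≤ 0 → max 0 (min r N0) = 0 := fun r hr =>
    max_eq_left ((min_le_left _ _).trans hr)
  have hcl : ∀ r : ℝ, 0 ≤ max 0 (min r N0) := fun r => le_max_left _ _
  have hx1 : ∀ t ∈ Icc 0 t_f, 0 ≤ (x t).1 := by
    refine nonneg_of_integral_eq (g := fun s => (F s (clamp N0 (x s))).1) hxc.fst.continuousOn
      (by rw [hx0]; exact hR0) ⟨(hci t_f hTmem).1.fst, (hci t_f hTmem).2.fst⟩
      (fun t ht => by rw [hx0]; exact congrArg Prod.fst (hcomp t ht)) fun t ht hle => ?_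
    simp only [F, vf, clamp, hclamp0 _ hle]
    have := mul_nonneg hlam1 (hcl (x t).2.1)
    have := mul_nonneg (mul_nonneg ha1.1 (hu1_range t ht).1) (hcl (x t).2.2)
    simp only [mul_zero, zero_div]
    linarith
  have hx2 : ∀ t ∈ Icc 0 t_f, 0 ≤ (x t).2.1 := by
    refine nonneg_of_integral_eq (g := fun s => (F s (clamp N0 (x s))).2.1)
      hxc.snd.fst.continuousOn
      (by rw [hx0]; exact hC0) ⟨(hci t_f hTmem).1.snd.fst, (hci t_f hTmem).2.snd.fst⟩
      (fun t ht => by rw [hx0]; exact congrArg (fun z => z.2.1) (hcomp t ht)) fun t ht hle => ?_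
    simp only [F, vf, clamp, hclamp0 _ hle]
    have := mul_nonneg hlam2 (hcl (x t).1)
    have := mul_nonneg (mul_nonneg (sub_nonneg.2 ha1.2) (hu1_range t ht).1) (hcl (x t).2.2)
    have := div_nonneg (mul_nonneg (mul_nonneg (mul_nonneg (sub_nonneg.2 ha2.2) (hwb t ht).1)
      (hcl (x t).2.2)) (hcl (x t).1)) hN0.le
    simp only [mul_zero]
    linarith
  have hx3 : ∀ t ∈ Icc 0 t_f, 0 ≤ (x t).2.2 := by
    refine nonneg_of_integral_eq (g := fun s => (F s (clamp N0 (x s))).2.2)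
      hxc.snd.snd.continuousOn
      (by rw [hx0]; exact hP0) ⟨(hci t_f hTmem).1.snd.snd, (hci t_f hTmem).2.snd.snd⟩
      (fun t ht => by rw [hx0]; exact congrArg (fun z => z.2.2) (hcomp t ht)) fun t ht hle => ?_
    simp only [F, vf, clamp, hclamp0 _ hle]
    have := mul_nonneg (hgam_nonneg t ht) (add_nonneg (hcl (x t).1) (hcl (x t).2.1))
    simp only [mul_zero, zero_mul, zero_div]
    linarith
  have hxsum : ∀ t ∈ Icc 0 t_f, (x t).1 + (x t).2.1 + (x t).2.2 = N0 := by
    intro t ht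
    have i := hci t ht
    have i1 : IntervalIntegrable (fun s => (F s (clamp N0 (x s))).1) volume 0 t :=
      ⟨i.1.fst, i.2.fst⟩
    have i2 : IntervalIntegrable (fun s => (F s (clamp N0 (x s))).2.1) volume 0 t :=
      ⟨i.1.snd.fst, i.2.snd.fst⟩
    have i3 : IntervalIntegrable (fun s => (F s (clamp N0 (x s))).2.2) volume 0 t :=
      ⟨i.1.snd.snd, i.2.snd.snd⟩
    have hz : (∫ s in (0:ℝ)..t, (F s (clamp N0 (x s))).1)
        + (∫ s in (0:ℝ)..t, (F s (clamp N0 (x s))).2.1)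
        + (∫ s in (0:ℝ)..t, (F s (clamp N0 (x s))).2.2) = 0 := by
      rw [← intervalIntegral.integral_add i1 i2, ← intervalIntegral.integral_add (i1.add i2) i3]
      refine intervalIntegral.integral_zero_ae (ae_of_all _ fun s _ => ?_)
      simp only [F, vf]; ring
    rw [hcomp t ht]
    simp only [Prod.fst_add, Prod.snd_add]
    linarith
  have hxclamp : ∀ t ∈ Icc 0 t_f, clamp N0 (x t) = x t := fun t ht => by
    have := hx1 t ht
    have := hx2 t ht
    have := hx3 t ht
    have := hxsum t ht
    exact clamp_of_mem ⟨by assumption, by linarith⟩ ⟨by assumption, by linarith⟩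
      ⟨by assumption, by linarith⟩
  have hxF : ∀ t ∈ Icc 0 t_f, x t = (R0, C0, P0) + ∫ s in (0:ℝ)..t, F s (x s) := by
    intro t ht
    rw [hx t ht]
    congr 1
    refine intervalIntegral.integral_congr fun s hs => ?_
    rw [uIcc_of_le ht.1] at hs
    simp only [hxclamp s ⟨hs.1, hs.2.trans ht.2⟩]
  refine ⟨fun t => (x t).1, fun t => (x t).2.1, fun t => (x t).2.2, ⟨?_, ?_, ?_, ?_⟩, ?_⟩
  · refine (isSolution_iff_of_sum_eq hT hN0.ne' hg hv hw hxc.fst.continuousOn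
      hxc.snd.fst.continuousOn hxc.snd.snd.continuousOn hxsum).2 fun t ht => ?_
    rw [hx0]
    exact hxF t ht
  · simp only [hx0]
  · simp only [hx0]
  · simp only [hx0]
  -- Any other solution is bounded too, so Grönwall applies on a common ball of radius `M`.
  · rintro R C P ⟨hsol, hR, hC, hP⟩ t ht
    have hs : ∀ t ∈ Icc 0 t_f, R t + C t + P t = N0 := by
      have hs0 : R 0 + C 0 + P 0 = N0 := by rw [hR, hC, hP, hsum]
      have := hsol.sum_eq hT hg hv hw (by rwa [hs0])
      rwa [hs0] at this
    have hyc : ContinuousOn (fun t => (R t, C t, P t)) (Icc 0 t_f) :=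
      hsol.1.prodMk (hsol.2.1.prodMk hsol.2.2.1)
    have hy := (isSolution_iff_of_sum_eq hT hN0.ne' hg hv hw hsol.1 hsol.2.1 hsol.2.2.1 hs).1 hsol
    rw [hR, hC, hP] at hy
    obtain ⟨M1, hM1⟩ := isCompact_Icc.exists_bound_of_continuousOn hxc.continuousOn
    obtain ⟨M2, hM2⟩ := isCompact_Icc.exists_bound_of_continuousOn hyc
    set M := max M1 M2
    have hM : 0 ≤ M := (norm_nonneg _).trans ((hM1 0 h0mem).trans (le_max_left _ _))
    have hd := eq_zero_of_le_integral (d := fun t => ‖(R t, C t, P t) - x t‖) (hLc M hM)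
      (hyc.sub hxc.continuousOn).norm (fun _ _ => norm_nonneg _) (fun t ht => by
        have hsub : Icc 0 t ⊆ Icc 0 t_f := Icc_subset_Icc_right ht.2
        have hdiff : (R t, C t, P t) - x t
            = ∫ s in (0:ℝ)..t, (F s (R s, C s, P s) - F s (x s)) := by
          rw [intervalIntegral.integral_sub (hFint _ hyc t ht)
            (hFint _ hxc.continuousOn t ht), hxF t ht, hy t ht, add_sub_add_left_eq_sub]
        simp only [hdiff]
        rw [← intervalIntegral.integral_const_mul]
        refine intervalIntegral.norm_integral_le_of_norm_le ht.1 (ae_of_all _ fun s hs => ?_) ?_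
        · have hs' : s ∈ Icc 0 t_f := ⟨hs.1.le, hs.2.trans ht.2⟩
          exact hF M s hs' _ _ ((hM2 s hs').trans (le_max_right _ _))
            ((hM1 s hs').trans (le_max_left _ _))
        · refine ContinuousOn.intervalIntegrable ?_
          rw [uIcc_of_le ht.1]
          exact (continuousOn_const.mul (hyc.sub hxc.continuousOn).norm).mono hsub) t ht
    have he : (R t, C t, P t) = x t := sub_eq_zero.1 (norm_eq_zero.1 hd)
    simp only [← he, and_self]
end

section
/- There exists an optimal control pair (u₁*, u₂*) with measurable u₁* : [0,t_f] → [0,u₁max], u₂* : [0,t_f] → [0,u₂max], and a corresponding absolutely continuous solution (R*, C*, P*) of the system R' = -λ₂R + λ₁C - γ(t)R + α₁u₁(t)P + α₂(β(t)+u₂(t))PR/N, C' = -λ₁C + λ₂R - γ(t)C + (1-α₂)(β(t)+u₂(t))PR/N + (1-α₁)u₁(t)P, P' = -(β(t)+u₂(t))PR/N - u₁(t)P + γ(t)(R+C) with N = R+C+P and initial condition (R(0),C(0),P(0)) = (R₀,C₀,P₀), such that the cost J(P*, u₁*, u₂*) = ∫₀^{t_f} κ₁P* + κ₂(u₁*)²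 + κ₃(u₂*)² dt is less than or equal to J(P, u₁, u₂) for every feasible pair, i.e., for every measurable control pair (u₁, u₂) with values in [0,u₁max] × [0,u₂max] together with the corresponding absolutely continuous solution (R, C, P) of the same initial value problem. -/
/-!
The proof is the direct method of the calculus of variations.

*A priori bounds.* The three right-hand sides sum to zero, so the total `R + C + P` keeps its initial
value `N0 > 0` (`IsSolution.total_eq`), and a Grönwall argument for the negative parts shows that the
states stay nonnegative (`IsSolution.nonneg`). Hence all feasible states take values in `[0, N0]`
and share a Lipschitz constant (`Feasible.bounds`). In particular the cost is nonnegative. The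
feasible set is nonempty because the uncontrolled system is solvable: Picard–Lindelöf applies to a
truncation of the field whose solutions never feel the truncation (`exists_free_solution`).

*Compactness.* Along a nonprincipal ultrafilter, a minimizing sequence of states converges uniformly
by Arzelà–Ascoli (`exists_tendsto_of_lipschitz`), and the controls converge weakly in `L²` by
Banach–Alaoglu, to limits which again respect the control bounds (`exists_tendstoWeakly`).

*Passage to the limit.* On `R + C + P = N0` the dynamics are affine in the controls with
coefficients polynomial in the states (`rhs_eq_affine`), and the integral of a weakly convergent
factor times a uniformly convergent one converges, so the limit is feasible
(`integral_eq_of_tendsto`). The cost is convex in the controls, hence weakly lower semicontinuous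
(`cost_le_of_tendsto`), so the limit attains the infimum.
-/

open Set MeasureTheory

/-- A feasible pair of the optimal control problem: measurable controls with values in
`[0,u₁max] × [0,u₂max]` on `[0,t_f]` together with a corresponding absolutely continuous
solution of the state equations with the prescribed initial conditions. -/
noncomputable def Feasible (t_f lam1 lam2 a1 a2 u1max u2max R0 C0 P0 : ℝ)
    (beta gam u1 u2 R C P : ℝ → ℝ) : Prop :=
  Measurable u1 ∧ Measurable u2 ∧
  (∀ t ∈ Icc (0:ℝ) t_f, u1 t ∈ Icc 0 u1max) ∧
  (∀ t ∈ Icc (0:ℝ) t_f, u2 t ∈ Icc 0 u2max) ∧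
  IsSolution t_f lam1 lam2 a1 a2 beta gam u1 u2 R C P ∧
  R 0 = R0 ∧ C 0 = C0 ∧ P 0 = P0

/-- The cost functional `J(P,u₁,u₂) = ∫₀^{t_f} κ₁P + κ₂u₁² + κ₃u₂² dt`. -/
noncomputable def cost (t_f k1 k2 k3 : ℝ) (P u1 u2 : ℝ → ℝ) : ℝ :=
  ∫ t in (0:ℝ)..t_f, (k1 * P t + k2 * u1 t ^ 2 + k3 * u2 t ^ 2)

/-! ### Grönwall-type lemmas -/

/-- Integral form of the Grönwall inequality with zero initial value. -/
lemma eq_zero_of_le_mul_integral {T K : ℝ} {w : ℝ → ℝ} (hw : ContinuousOn w (Icc 0 T))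
    (hw0 : ∀ t ∈ Icc (0:ℝ) T, 0 ≤ w t)
    (h : ∀ t ∈ Icc (0:ℝ) T, w t ≤ K * ∫ s in (0:ℝ)..t, w s) :
    ∀ t ∈ Icc (0:ℝ) T, w t = 0 := by
  intro t ht
  have hT : (0:ℝ) ≤ T := ht.1.trans ht.2
  have hinteg : IntegrableOn w (Icc 0 T) := hw.integrableOn_Icc
  have hnn : ∀ t ∈ Icc (0:ℝ) T, 0 ≤ ∫ s in (0:ℝ)..t, w s := fun t ht =>
    intervalIntegral.integral_nonneg ht.1 fun s hs => hw0 s ⟨hs.1, hs.2.trans ht.2⟩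
  have hcont : ContinuousOn (fun t => ∫ s in (0:ℝ)..t, w s) (Icc 0 T) := by
    have := intervalIntegral.continuousOn_primitive_interval (f := w) (μ := volume) (a := 0)
      (b := T) (by rwa [uIcc_of_le hT])
    rwa [uIcc_of_le hT] at this
  have hder : ∀ x ∈ Ico (0:ℝ) T,
      HasDerivWithinAt (fun t => ∫ s in (0:ℝ)..t, w s) (w x) (Ici x) x := by
    intro x hx
    have hsub : Icc x T ⊆ Icc 0 T := Icc_subset_Icc_left hx.1
    have hc : ContinuousWithinAt w (Icc x T) x := (hw.mono hsub) x ⟨le_rfl, hx.2.le⟩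
    have hnh : nhdsWithin x (Ici x) = nhdsWithin x (Icc x T) :=
      (nhdsWithin_Icc_eq_nhdsGE hx.2).symm
    have hc' : ContinuousWithinAt w (Ici x) x := by
      unfold ContinuousWithinAt; rw [hnh]; exact hc
    refine intervalIntegral.integral_hasDerivWithinAt_right
      ((hinteg.mono_set ?_).intervalIntegrable) ?_ (hc'.mono Ioi_subset_Ici_self)
    · rw [uIcc_of_le hx.1]; exact Icc_subset_Icc_right hx.2.le
    · refine ⟨Icc x T, ?_, (hw.mono hsub).aestronglyMeasurable measurableSet_Icc⟩
      exact nhdsWithin_mono x Ioi_subset_Ici_self (Icc_mem_nhdsGE hx.2)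
  have hF := eq_zero_of_abs_deriv_le_mul_abs_self_of_eq_zero_right (K := K) hcont hder (by simp)
    (fun x hx => by
      have hx' : x ∈ Icc 0 T := Ico_subset_Icc_self hx
      rw [Real.norm_of_nonneg (hw0 x hx'), Real.norm_of_nonneg (hnn x hx')]
      exact h x hx') t ht
  have := h t ht
  rw [hF, mul_zero] at this
  exact le_antisymm this (hw0 t ht)

/-- If `x' = f`, `x 0 ≥ 0` and `f ≥ -K w` wherever `x` is negative, then the negative part of `x`
grows at most like `K ∫ w`: integrate from the last time at which `x` was nonnegative. -/
lemma negPart_le_mul_integral {T K : ℝ} {x f w : ℝ → ℝ} (hK : 0 ≤ K)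
    (hx : ContinuousOn x (Icc 0 T)) (hf : IntegrableOn f (Icc 0 T))
    (hw : ContinuousOn w (Icc 0 T)) (hw0 : ∀ t ∈ Icc (0:ℝ) T, 0 ≤ w t)
    (hxf : ∀ t ∈ Icc (0:ℝ) T, x t = x 0 + ∫ s in (0:ℝ)..t, f s) (hx0 : 0 ≤ x 0)
    (h : ∀ s ∈ Icc (0:ℝ) T, x s < 0 → - f s ≤ K * w s) :
    ∀ t ∈ Icc (0:ℝ) T, max (- x t) 0 ≤ K * ∫ s in (0:ℝ)..t, w s := by
  intro t ht
  have hii : ∀ {g : ℝ → ℝ}, IntegrableOn g (Icc 0 T) → ∀ a b, 0 ≤ a → a ≤ b → b ≤ T →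
      IntervalIntegrable g volume a b := fun {g} hg a b h0 hab hb =>
    (hg.mono_set (by rw [uIcc_of_le hab]; exact Icc_subset_Icc h0 hb)).intervalIntegrable
  have hwi : IntegrableOn w (Icc 0 T) := hw.integrableOn_Icc
  have hnn : 0 ≤ K * ∫ s in (0:ℝ)..t, w s := mul_nonneg hK
    (intervalIntegral.integral_nonneg ht.1 fun s hs => hw0 s ⟨hs.1, hs.2.trans ht.2⟩)
  refine max_le ?_ hnn
  by_cases hxt : 0 ≤ x t
  · linarith
  push Not at hxt
  -- the last time before `t` at which `x` is nonnegative
  set A : Set ℝ := Icc 0 t ∩ x ⁻¹' Ici 0 with hA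
  have hAc : IsClosed A :=
    (hx.mono (Icc_subset_Icc_right ht.2)).preimage_isClosed_of_isClosed isClosed_Icc isClosed_Ici
  have hAne : A.Nonempty := ⟨0, ⟨le_rfl, ht.1⟩, hx0⟩
  have hAb : BddAbove A := ⟨t, fun s hs => hs.1.2⟩
  set a := sSup A
  have haA : a ∈ A := hAc.csSup_mem hAne hAb
  have ha0 : 0 ≤ a := haA.1.1
  have hat : a ≤ t := haA.1.2
  have hneg : ∀ s ∈ Ioc a t, x s < 0 := by
    intro s hs
    by_contra hcon
    push Not at hcon
    exact absurd (le_csSup hAb (show s ∈ A from ⟨⟨ha0.trans hs.1.le, hs.2⟩, hcon⟩)) (not_le.2 hs.1)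
  have e1 : x t - x a = ∫ s in a..t, f s := by
    rw [hxf t ht, hxf a ⟨ha0, hat.trans ht.2⟩,
      ← intervalIntegral.integral_add_adjacent_intervals (hii hf 0 a le_rfl ha0 (hat.trans ht.2))
        (hii hf a t ha0 hat ht.2)]
    ring
  have e2 : ∫ s in a..t, - f s ≤ ∫ s in a..t, K * w s := by
    refine intervalIntegral.integral_mono_on_of_le_Ioo hat (hii hf a t ha0 hat ht.2).neg
      ((hii hwi a t ha0 hat ht.2).const_mul K) fun s hs => ?_
    exact h s ⟨ha0.trans hs.1.le, hs.2.le.trans ht.2⟩ (hneg s ⟨hs.1, hs.2.le⟩)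
  have e3 : ∫ s in (0:ℝ)..t, w s = (∫ s in (0:ℝ)..a, w s) + ∫ s in a..t, w s :=
    (intervalIntegral.integral_add_adjacent_intervals (hii hwi 0 a le_rfl ha0 (hat.trans ht.2))
        (hii hwi a t ha0 hat ht.2)).symm
  have e4 : 0 ≤ ∫ s in (0:ℝ)..a, w s :=
    intervalIntegral.integral_nonneg ha0 fun s hs => hw0 s ⟨hs.1, hs.2.trans (hat.trans ht.2)⟩
  rw [intervalIntegral.integral_neg, intervalIntegral.integral_const_mul] at e2
  have hxa : 0 ≤ x a := haA.2
  rw [e3]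
  nlinarith

/-! ### Conservation of the total and nonnegativity -/

/-- The right-hand sides are affine in the controls; this is the integrability of such an
expression when the coefficients are continuous and the controls bounded. -/
lemma integrableOn_affine {T M1 M2 : ℝ} {u1 u2 h0 h1 h2 : ℝ → ℝ}
    (hu1 : Measurable u1) (hu2 : Measurable u2)
    (hu1b : ∀ t ∈ Icc (0:ℝ) T, u1 t ∈ Icc 0 M1) (hu2b : ∀ t ∈ Icc (0:ℝ) T, u2 t ∈ Icc 0 M2)
    (c0 : ContinuousOn h0 (Icc 0 T)) (c1 : ContinuousOn h1 (Icc 0 T))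
    (c2 : ContinuousOn h2 (Icc 0 T)) :
    IntegrableOn (fun s => h0 s + u1 s * h1 s + u2 s * h2 s) (Icc 0 T) := by
  have key : ∀ {u h : ℝ → ℝ} {M : ℝ}, Measurable u → (∀ t ∈ Icc (0:ℝ) T, u t ∈ Icc 0 M) →
      ContinuousOn h (Icc 0 T) → IntegrableOn (fun s => u s * h s) (Icc 0 T) := by
    intro u h M hu hub hc
    refine Integrable.bdd_mul (c := M) hc.integrableOn_Icc hu.aestronglyMeasurable ?_
    refine (ae_restrict_iff' measurableSet_Icc).2 (ae_of_all _ fun t ht => ?_)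
    rw [Real.norm_of_nonneg (hub t ht).1]
    exact (hub t ht).2
  exact (c0.integrableOn_Icc.add (key hu1 hu1b c1)).add (key hu2 hu2b c2)

lemma integrableOn_rhs {t lam1 lam2 a1 a2 M1 M2 : ℝ} {beta gam u1 u2 R C P : ℝ → ℝ}
    (hu1 : Measurable u1) (hu2 : Measurable u2)
    (hu1b : ∀ s ∈ Icc (0:ℝ) t, u1 s ∈ Icc 0 M1) (hu2b : ∀ s ∈ Icc (0:ℝ) t, u2 s ∈ Icc 0 M2)
    (hb : ContinuousOn beta (Icc 0 t)) (hg : ContinuousOn gam (Icc 0 t))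
    (hR : ContinuousOn R (Icc 0 t)) (hC : ContinuousOn C (Icc 0 t))
    (hP : ContinuousOn P (Icc 0 t)) (hN : ∀ s ∈ Icc (0:ℝ) t, R s + C s + P s ≠ 0) :
    IntegrableOn (rhsR lam1 lam2 a1 a2 beta gam u1 u2 R C P) (Icc 0 t) ∧
    IntegrableOn (rhsC lam1 lam2 a1 a2 beta gam u1 u2 R C P) (Icc 0 t) ∧
    IntegrableOn (rhsP lam1 lam2 a1 a2 beta gam u1 u2 R C P) (Icc 0 t) := by
  have hq : ContinuousOn (fun s => P s * R s / (R s + C s + P s)) (Icc 0 t) :=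
    (hP.mul hR).div ((hR.add hC).add hP) hN
  refine ⟨?_, ?_, ?_⟩
  · refine (integrableOn_affine (M1 := M1) (M2 := M2) (u1 := u1) (u2 := u2)
      (h0 := fun s => -lam2 * R s + lam1 * C s - gam s * R s
        + a2 * beta s * (P s * R s / (R s + C s + P s)))
      (h1 := fun s => a1 * P s) (h2 := fun s => a2 * (P s * R s / (R s + C s + P s)))
      hu1 hu2 hu1b hu2b (by fun_prop) (by fun_prop) (by fun_prop)).congr_fun ?_ measurableSet_Icc
    intro s _
    simp only [rhsR]; ring
  · refine (integrableOn_affine (M1 := M1) (M2 := M2) (u1 := u1) (u2 := u2)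
      (h0 := fun s => -lam1 * C s + lam2 * R s - gam s * C s
        + (1 - a2) * beta s * (P s * R s / (R s + C s + P s)))
      (h1 := fun s => (1 - a1) * P s) (h2 := fun s => (1 - a2) * (P s * R s / (R s + C s + P s)))
      hu1 hu2 hu1b hu2b (by fun_prop) (by fun_prop) (by fun_prop)).congr_fun ?_ measurableSet_Icc
    intro s _
    simp only [rhsC]; ring
  · refine (integrableOn_affine (M1 := M1) (M2 := M2) (u1 := u1) (u2 := u2)
      (h0 := fun s => gam s * (R s + C s) - beta s * (P s * R s / (R s + C s + P s)))
      (h1 := fun s => - P s) (h2 := fun s => - (P s * R s / (R s + C s + P s)))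
      hu1 hu2 hu1b hu2b (by fun_prop) (by fun_prop) (by fun_prop)).congr_fun ?_ measurableSet_Icc
    intro s _
    simp only [rhsP]; ring

/-- The total population is conserved. The right-hand sides sum to zero, but they are known to be
integrable only as long as the total stays away from zero, so constancy
is first proved up to a hypothetical first time at which the total is nonpositive; before that time
the total would take half its initial value, by the intermediate value theorem. -/
lemma IsSolution.total_eq {T lam1 lam2 a1 a2 M1 M2 : ℝ} {beta gam u1 u2 R C P : ℝ → ℝ}
    (hb : ContinuousOn beta (Icc 0 T)) (hg : ContinuousOn gam (Icc 0 T))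
    (hu1 : Measurable u1) (hu2 : Measurable u2)
    (hu1b : ∀ s ∈ Icc (0:ℝ) T, u1 s ∈ Icc 0 M1) (hu2b : ∀ s ∈ Icc (0:ℝ) T, u2 s ∈ Icc 0 M2)
    (hs : IsSolution T lam1 lam2 a1 a2 beta gam u1 u2 R C P) (h0 : 0 < R 0 + C 0 + P 0) :
    ∀ t ∈ Icc (0:ℝ) T, R t + C t + P t = R 0 + C 0 + P 0 := by
  obtain ⟨hR, hC, hP, eR, eC, eP⟩ := hs
  have key : ∀ t ∈ Icc (0:ℝ) T, (∀ s ∈ Icc (0:ℝ) t, 0 < R s + C s + P s) →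
      R t + C t + P t = R 0 + C 0 + P 0 := by
    intro t ht hpos
    have hsub : Icc 0 t ⊆ Icc 0 T := Icc_subset_Icc_right ht.2
    obtain ⟨iR, iC, iP⟩ := integrableOn_rhs (lam1 := lam1) (lam2 := lam2) (a1 := a1) (a2 := a2)
      hu1 hu2 (fun s hs => hu1b s (hsub hs))
      (fun s hs => hu2b s (hsub hs)) (hb.mono hsub) (hg.mono hsub) (hR.mono hsub) (hC.mono hsub)
      (hP.mono hsub) (fun s hs => (hpos s hs).ne')
    rw [← uIcc_of_le ht.1] at iR iC iP
    have hsum : (∫ s in (0:ℝ)..t, rhsR lam1 lam2 a1 a2 beta gam u1 u2 R C P s) +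
        (∫ s in (0:ℝ)..t, rhsC lam1 lam2 a1 a2 beta gam u1 u2 R C P s) +
        (∫ s in (0:ℝ)..t, rhsP lam1 lam2 a1 a2 beta gam u1 u2 R C P s) = 0 := by
      rw [← intervalIntegral.integral_add iR.intervalIntegrable iC.intervalIntegrable,
        ← intervalIntegral.integral_add (iR.intervalIntegrable.add iC.intervalIntegrable)
          iP.intervalIntegrable]
      refine (intervalIntegral.integral_congr (g := fun _ => 0) fun s _ => ?_).trans (by simp)
      simp only [rhsR, rhsC, rhsP]; ring
    rw [eR t ht, eC t ht, eP t ht]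
    linarith
  have hNc : ContinuousOn (fun s => R s + C s + P s) (Icc 0 T) := (hR.add hC).add hP
  have hpos : ∀ t ∈ Icc (0:ℝ) T, 0 < R t + C t + P t := by
    by_contra hcon
    push Not at hcon
    set A : Set ℝ := Icc 0 T ∩ (fun s => R s + C s + P s) ⁻¹' Iic 0
    have hAc : IsClosed A := hNc.preimage_isClosed_of_isClosed isClosed_Icc isClosed_Iic
    have hAne : A.Nonempty := by
      obtain ⟨t, ht, h⟩ := hcon
      exact ⟨t, ht, h⟩
    have hAb : BddBelow A := ⟨0, fun s hs => hs.1.1⟩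
    have haA : sInf A ∈ A := hAc.csInf_mem hAne hAb
    set a := sInf A
    have haN : R a + C a + P a ≤ 0 := haA.2
    obtain ⟨r, hr, hr2⟩ := intermediate_value_Icc' haA.1.1
      (hNc.mono (Icc_subset_Icc_right haA.1.2))
      (show (R 0 + C 0 + P 0) / 2 ∈ Icc _ _ from ⟨by linarith, by linarith⟩)
    have hra : r ≠ a := by rintro rfl; linarith
    have hlt : r < a := lt_of_le_of_ne hr.2 hra
    have := key r ⟨hr.1, hr.2.trans haA.1.2⟩ fun s hs => by
      by_contra hcs
      push Not at hcs
      have : a ≤ s := csInf_le hAb ⟨⟨hs.1, hs.2.trans (hr.2.trans haA.1.2)⟩, hcs⟩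
      linarith [hs.2]
    linarith
  exact fun t ht => key t ht fun s hs => hpos s ⟨hs.1, hs.2.trans ht.2⟩

lemma neg_mul_le_negPart {p r M : ℝ} (hp : |p| ≤ M) (hr : |r| ≤ M) :
    - (p * r) ≤ M * (max (-p) 0 + max (-r) 0) := by
  rw [abs_le] at hp hr
  have hM : 0 ≤ M := by linarith
  rcases le_total 0 p with h1 | h1 <;> rcases le_total 0 r with h2 | h2
  · rw [max_eq_right (by linarith), max_eq_right (by linarith)]
    nlinarith [mul_nonneg h1 h2]
  · rw [max_eq_right (by linarith), max_eq_left (by linarith)]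
    nlinarith
  · rw [max_eq_left (by linarith), max_eq_right (by linarith)]
    nlinarith
  · rw [max_eq_left (by linarith), max_eq_left (by linarith)]
    nlinarith

/-- Solutions with nonnegative initial data stay nonnegative: the sum `W` of the negative parts
satisfies `W t ≤ 3 K ∫₀ᵗ W` for a constant `K`, hence vanishes. -/
lemma IsSolution.nonneg {T lam1 lam2 a1 a2 M1 M2 B G : ℝ} {beta gam u1 u2 R C P : ℝ → ℝ}
    (hl1 : 0 ≤ lam1) (hl2 : 0 ≤ lam2) (ha1 : a1 ∈ Icc (0:ℝ) 1) (ha2 : a2 ∈ Icc (0:ℝ) 1)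
    (hb : ContinuousOn beta (Icc 0 T)) (hg : ContinuousOn gam (Icc 0 T))
    (hbb : ∀ s ∈ Icc (0:ℝ) T, beta s ∈ Icc 0 B) (hgb : ∀ s ∈ Icc (0:ℝ) T, gam s ∈ Icc 0 G)
    (hu1 : Measurable u1) (hu2 : Measurable u2)
    (hu1b : ∀ s ∈ Icc (0:ℝ) T, u1 s ∈ Icc 0 M1) (hu2b : ∀ s ∈ Icc (0:ℝ) T, u2 s ∈ Icc 0 M2)
    (hs : IsSolution T lam1 lam2 a1 a2 beta gam u1 u2 R C P)
    (hR0 : 0 ≤ R 0) (hC0 : 0 ≤ C 0) (hP0 : 0 ≤ P 0) (h0 : 0 < R 0 + C 0 + P 0) :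
    ∀ t ∈ Icc (0:ℝ) T, 0 ≤ R t ∧ 0 ≤ C t ∧ 0 ≤ P t := by
  intro t0 ht0
  have hN := hs.total_eq hb hg hu1 hu2 hu1b hu2b h0
  obtain ⟨hR, hC, hP, eR, eC, eP⟩ := hs
  have h00 : (0:ℝ) ∈ Icc (0:ℝ) T := ⟨le_rfl, ht0.1.trans ht0.2⟩
  obtain ⟨iR, iC, iP⟩ := integrableOn_rhs (lam1 := lam1) (lam2 := lam2) (a1 := a1) (a2 := a2)
      hu1 hu2 hu1b hu2b hb hg hR hC hP (fun s hs => by rw [hN s hs]; exact h0.ne')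
  set N0 := R 0 + C 0 + P 0
  obtain ⟨MR, hMR⟩ := isCompact_Icc.exists_bound_of_continuousOn hR
  obtain ⟨MP, hMP⟩ := isCompact_Icc.exists_bound_of_continuousOn hP
  set M := max MR MP with hM
  have hRM : ∀ s ∈ Icc (0:ℝ) T, |R s| ≤ M := fun s hs => (hMR s hs).trans (le_max_left _ _)
  have hPM : ∀ s ∈ Icc (0:ℝ) T, |P s| ≤ M := fun s hs => (hMP s hs).trans (le_max_right _ _)
  have hM0 : 0 ≤ M := (abs_nonneg _).trans (hRM 0 h00)
  have hB : 0 ≤ B := (hbb 0 h00).1.trans (hbb 0 h00).2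
  have hG : 0 ≤ G := (hgb 0 h00).1.trans (hgb 0 h00).2
  have hM1 : 0 ≤ M1 := (hu1b 0 h00).1.trans (hu1b 0 h00).2
  have hM2 : 0 ≤ M2 := (hu2b 0 h00).1.trans (hu2b 0 h00).2
  set W : ℝ → ℝ := fun s => max (- R s) 0 + max (- C s) 0 + max (- P s) 0 with hW
  have hWc : ContinuousOn W (Icc 0 T) :=
    ((hR.neg.sup continuousOn_const).add (hC.neg.sup continuousOn_const)).add
      (hP.neg.sup continuousOn_const)
  have hW0 : ∀ s ∈ Icc (0:ℝ) T, 0 ≤ W s := fun s _ => by simp only [W]; positivity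
  set Q := (B + M2) * M / N0 with hQ
  have hQ0 : 0 ≤ Q := by positivity
  set K := lam1 + lam2 + M1 + G + Q with hK
  have hK0 : 0 ≤ K := by positivity
  -- the interaction term is bounded below by the negative parts of its two factors
  have hquad : ∀ s ∈ Icc (0:ℝ) T, - ((beta s + u2 s) * P s * R s / (R s + C s + P s)) ≤
      Q * (max (- P s) 0 + max (- R s) 0) := by
    intro s hs
    rw [hN s hs]
    have hbs := hbb s hs
    have hus := hu2b s hs
    have h1 := neg_mul_le_negPart (hPM s hs) (hRM s hs)
    have h2 : 0 ≤ (beta s + u2 s) / N0 := div_nonneg (add_nonneg hbs.1 hus.1) h0.le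
    have h3 : (beta s + u2 s) / N0 ≤ (B + M2) / N0 :=
      div_le_div_of_nonneg_right (add_le_add hbs.2 hus.2) h0.le
    have h4 : 0 ≤ M * (max (- P s) 0 + max (- R s) 0) := by positivity
    calc _ = (beta s + u2 s) / N0 * (-(P s * R s)) := by ring
      _ ≤ (beta s + u2 s) / N0 * (M * (max (- P s) 0 + max (- R s) 0)) :=
        mul_le_mul_of_nonneg_left h1 h2
      _ ≤ (B + M2) / N0 * (M * (max (- P s) 0 + max (- R s) 0)) :=
        mul_le_mul_of_nonneg_right h3 h4
      _ = _ := by rw [hQ]; ring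
  have hlin : ∀ {a A x : ℝ}, 0 ≤ a → a ≤ A → - (a * x) ≤ A * max (-x) 0 := by
    intro a A x ha hA
    calc - (a * x) = a * (-x) := by ring
      _ ≤ a * max (-x) 0 := mul_le_mul_of_nonneg_left (le_max_left _ _) ha
      _ ≤ A * max (-x) 0 := mul_le_mul_of_nonneg_right hA (le_max_right _ _)
  have hsmall : ∀ {s x : ℝ}, x ≤ W s → ∀ {A : ℝ}, 0 ≤ A → A * x ≤ A * W s :=
    fun {_ _} h {_} hA => mul_le_mul_of_nonneg_left h hA
  have hfrac : ∀ {a q Z : ℝ}, a ∈ Icc (0:ℝ) 1 → -q ≤ Z → 0 ≤ Z → -(a * q) ≤ Z := by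
    intro a q Z ha hq hZ
    nlinarith [ha.1, ha.2, mul_le_mul_of_nonneg_left hq ha.1]
  have y1 := fun s => le_max_right (- R s) 0
  have y2 := fun s => le_max_right (- C s) 0
  have y3 := fun s => le_max_right (- P s) 0
  have ha1' : 1 - a1 ∈ Icc (0:ℝ) 1 := ⟨by linarith [ha1.2], by linarith [ha1.1]⟩
  have ha2' : 1 - a2 ∈ Icc (0:ℝ) 1 := ⟨by linarith [ha2.2], by linarith [ha2.1]⟩
  have hKW : ∀ s, K * W s = lam1 * W s + lam2 * W s + M1 * W s + G * W s + Q * W s :=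
    fun s => by rw [hK]; ring
  have bR := negPart_le_mul_integral (K := K) hK0 hR iR hWc hW0 eR hR0 (by
    intro s hs hneg
    have t1 := hlin (x := C s) hl1 le_rfl
    have t2 := hfrac ha1 (hlin (x := P s) (hu1b s hs).1 (hu1b s hs).2)
      (mul_nonneg hM1 (y3 s))
    have t3 := hfrac ha2 (hquad s hs) (mul_nonneg hQ0 (add_nonneg (y3 s) (y1 s)))
    have t4 : (lam2 + gam s) * R s ≤ 0 :=
      mul_nonpos_of_nonneg_of_nonpos (add_nonneg hl2 (hgb s hs).1) hneg.le
    have s1 := hsmall (s := s) (x := max (- C s) 0) (by simp only [W]; linarith [y1 s, y3 s]) hl1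
    have s2 := hsmall (s := s) (x := max (- P s) 0) (by simp only [W]; linarith [y1 s, y2 s]) hM1
    have s3 := hsmall (s := s) (x := max (- P s) 0 + max (- R s) 0)
      (by simp only [W]; linarith [y2 s]) hQ0
    have s4 := mul_nonneg hl2 (hW0 s hs)
    have s5 := mul_nonneg hG (hW0 s hs)
    have e : - rhsR lam1 lam2 a1 a2 beta gam u1 u2 R C P s = (lam2 + gam s) * R s - lam1 * C s
        - a1 * (u1 s * P s) - a2 * ((beta s + u2 s) * P s * R s / (R s + C s + P s)) := by
      simp only [rhsR]; ring
    rw [hKW, e]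
    linarith)
  have bC := negPart_le_mul_integral (K := K) hK0 hC iC hWc hW0 eC hC0 (by
    intro s hs hneg
    have t1 := hlin (x := R s) hl2 le_rfl
    have t2 := hfrac ha1' (hlin (x := P s) (hu1b s hs).1 (hu1b s hs).2)
      (mul_nonneg hM1 (y3 s))
    have t3 := hfrac ha2' (hquad s hs) (mul_nonneg hQ0 (add_nonneg (y3 s) (y1 s)))
    have t4 : (lam1 + gam s) * C s ≤ 0 :=
      mul_nonpos_of_nonneg_of_nonpos (add_nonneg hl1 (hgb s hs).1) hneg.le
    have s1 := hsmall (s := s) (x := max (- R s) 0) (by simp only [W]; linarith [y2 s, y3 s]) hl2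
    have s2 := hsmall (s := s) (x := max (- P s) 0) (by simp only [W]; linarith [y1 s, y2 s]) hM1
    have s3 := hsmall (s := s) (x := max (- P s) 0 + max (- R s) 0)
      (by simp only [W]; linarith [y2 s]) hQ0
    have s4 := mul_nonneg hl1 (hW0 s hs)
    have s5 := mul_nonneg hG (hW0 s hs)
    have e : - rhsC lam1 lam2 a1 a2 beta gam u1 u2 R C P s = (lam1 + gam s) * C s - lam2 * R s
        - (1 - a1) * (u1 s * P s)
        - (1 - a2) * ((beta s + u2 s) * P s * R s / (R s + C s + P s)) := by
      simp only [rhsC]; ring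
    rw [hKW, e]
    linarith)
  have bP := negPart_le_mul_integral (K := K) hK0 hP iP hWc hW0 eP hP0 (by
    intro s hs hneg
    have hbs := hbb s hs
    have hus := hu2b s hs
    have t1 := hlin (x := R s) (hgb s hs).1 (hgb s hs).2
    have t2 := hlin (x := C s) (hgb s hs).1 (hgb s hs).2
    have t3 : (beta s + u2 s) * P s * R s / (R s + C s + P s) ≤ Q * max (- P s) 0 := by
      rw [hN s hs, max_eq_left (by linarith)]
      have h1 : P s * R s ≤ M * (- P s) := by nlinarith [(abs_le.1 (hRM s hs)).1]
      have h2 : 0 ≤ (beta s + u2 s) / N0 := div_nonneg (add_nonneg hbs.1 hus.1) h0.le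
      have h3 : (beta s + u2 s) / N0 ≤ (B + M2) / N0 :=
        div_le_div_of_nonneg_right (add_le_add hbs.2 hus.2) h0.le
      calc _ = (beta s + u2 s) / N0 * (P s * R s) := by ring
        _ ≤ (beta s + u2 s) / N0 * (M * (- P s)) := mul_le_mul_of_nonneg_left h1 h2
        _ ≤ (B + M2) / N0 * (M * (- P s)) :=
          mul_le_mul_of_nonneg_right h3 (mul_nonneg hM0 (by linarith))
        _ = _ := by rw [hQ]; ring
    have t4 : u1 s * P s ≤ 0 :=
      mul_nonpos_of_nonneg_of_nonpos (hu1b s hs).1 hneg.le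
    have s1 := hsmall (s := s) (x := max (- R s) 0 + max (- C s) 0)
      (by simp only [W]; linarith [y3 s]) hG
    have s3 := hsmall (s := s) (x := max (- P s) 0)
      (by simp only [W]; linarith [y1 s, y2 s]) hQ0
    have s4 := mul_nonneg hl1 (hW0 s hs)
    have s5 := mul_nonneg hl2 (hW0 s hs)
    have s6 := mul_nonneg hM1 (hW0 s hs)
    have e : - rhsP lam1 lam2 a1 a2 beta gam u1 u2 R C P s =
        (beta s + u2 s) * P s * R s / (R s + C s + P s) + u1 s * P s
        - gam s * R s - gam s * C s := by
      simp only [rhsP]; ring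
    rw [hKW, e]
    linarith)
  have hz := eq_zero_of_le_mul_integral (K := 3 * K) hWc hW0 (fun t ht => by
    have := bR t ht
    have := bC t ht
    have := bP t ht
    simp only [W] at *
    linarith) t0 ht0
  simp only [W] at hz
  have z1 := le_max_left (- R t0) 0
  have z2 := le_max_left (- C t0) 0
  have z3 := le_max_left (- P t0) 0
  refine ⟨?_, ?_, ?_⟩ <;> linarith [y1 t0, y2 t0, y3 t0]

/-! ### A priori bounds for feasible pairs -/

/-- On the simplex `R + C + P = N0` the right-hand sides are bounded by a constant depending only
on the data. -/
lemma abs_rhs_le {lam1 lam2 a1 a2 N0 B G M1 M2 s : ℝ} {beta gam u1 u2 R C P : ℝ → ℝ}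
    (hl1 : 0 ≤ lam1) (hl2 : 0 ≤ lam2) (ha1 : a1 ∈ Icc (0:ℝ) 1) (ha2 : a2 ∈ Icc (0:ℝ) 1)
    (hN0 : 0 < N0) (hb : beta s ∈ Icc 0 B) (hg : gam s ∈ Icc 0 G)
    (hu1 : u1 s ∈ Icc 0 M1) (hu2 : u2 s ∈ Icc 0 M2)
    (hR : R s ∈ Icc 0 N0) (hC : C s ∈ Icc 0 N0) (hP : P s ∈ Icc 0 N0)
    (hN : R s + C s + P s = N0) :
    |rhsR lam1 lam2 a1 a2 beta gam u1 u2 R C P s| ≤ (lam1 + lam2 + 2 * G + M1 + (B + M2)) * N0 ∧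
    |rhsC lam1 lam2 a1 a2 beta gam u1 u2 R C P s| ≤ (lam1 + lam2 + 2 * G + M1 + (B + M2)) * N0 ∧
    |rhsP lam1 lam2 a1 a2 beta gam u1 u2 R C P s| ≤
      (lam1 + lam2 + 2 * G + M1 + (B + M2)) * N0 := by
  have hlin : ∀ {k A z Z : ℝ}, k ∈ Icc 0 A → z ∈ Icc 0 Z → k * z ∈ Icc 0 (A * Z) :=
    fun hk hz => ⟨mul_nonneg hk.1 hz.1, mul_le_mul hk.2 hz.2 hz.1 (hk.1.trans hk.2)⟩
  have hq : P s * R s / N0 ∈ Icc 0 N0 := by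
    refine ⟨div_nonneg (mul_nonneg hP.1 hR.1) hN0.le, ?_⟩
    rw [div_le_iff₀ hN0]
    exact mul_le_mul hP.2 hR.2 hR.1 hN0.le
  have hbu : beta s + u2 s ∈ Icc 0 (B + M2) := ⟨add_nonneg hb.1 hu2.1, add_le_add hb.2 hu2.2⟩
  have hw := hlin hbu hq
  have ha1' : 1 - a1 ∈ Icc (0:ℝ) 1 := ⟨by linarith [ha1.2], by linarith [ha1.1]⟩
  have ha2' : 1 - a2 ∈ Icc (0:ℝ) 1 := ⟨by linarith [ha2.2], by linarith [ha2.1]⟩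
  obtain ⟨w2, w2'⟩ := hlin ha2 hw
  obtain ⟨w3, w3'⟩ := hlin ha2' hw
  obtain ⟨w1, w1'⟩ := hw
  obtain ⟨p1, p1'⟩ := hlin hu1 hP
  obtain ⟨p2, p2'⟩ := hlin ha1 (hlin hu1 hP)
  obtain ⟨p3, p3'⟩ := hlin ha1' (hlin hu1 hP)
  obtain ⟨g1, g1'⟩ := hlin hg hR
  obtain ⟨g2, g2'⟩ := hlin hg hC
  obtain ⟨r1, r1'⟩ := hlin ⟨hl1, le_refl lam1⟩ hC
  obtain ⟨r2, r2'⟩ := hlin ⟨hl2, le_refl lam2⟩ hR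
  have eR : rhsR lam1 lam2 a1 a2 beta gam u1 u2 R C P s = -(lam2 * R s) + lam1 * C s - gam s * R s
      + a1 * (u1 s * P s) + a2 * ((beta s + u2 s) * (P s * R s / N0)) := by
    simp only [rhsR, hN]; ring
  have eC : rhsC lam1 lam2 a1 a2 beta gam u1 u2 R C P s = -(lam1 * C s) + lam2 * R s - gam s * C s
      + (1 - a2) * ((beta s + u2 s) * (P s * R s / N0)) + (1 - a1) * (u1 s * P s) := by
    simp only [rhsC, hN]; ring
  have eP : rhsP lam1 lam2 a1 a2 beta gam u1 u2 R C P s = -((beta s + u2 s) * (P s * R s / N0))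
      - u1 s * P s + gam s * R s + gam s * C s := by
    simp only [rhsP, hN]; ring
  rw [eR, eC, eP]
  have hz1 : 0 ≤ (lam1 + lam2 + 2 * G + M1 + (B + M2)) * N0 := by
    have := hg.1.trans hg.2
    have := hu1.1.trans hu1.2
    have := hbu.1.trans hbu.2
    positivity
  refine ⟨?_, ?_, ?_⟩ <;> rw [abs_le] <;> constructor <;> linarith

/-- An absolutely continuous function whose derivative is bounded by `K` is `K`-Lipschitz. -/
lemma abs_sub_le_of_integral_eq {T K : ℝ} {x f : ℝ → ℝ} (hf : IntegrableOn f (Icc 0 T))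
    (hx : ∀ t ∈ Icc (0:ℝ) T, x t = x 0 + ∫ s in (0:ℝ)..t, f s)
    (hK : ∀ s ∈ Icc (0:ℝ) T, |f s| ≤ K) {s t : ℝ} (hs : s ∈ Icc (0:ℝ) T)
    (ht : t ∈ Icc (0:ℝ) T) : |x t - x s| ≤ K * |t - s| := by
  have hi : ∀ r ∈ Icc (0:ℝ) T, IntervalIntegrable f volume 0 r := fun r hr =>
    IntegrableOn.intervalIntegrable (by
      rw [uIcc_of_le hr.1]; exact hf.mono_set (Icc_subset_Icc_right hr.2))
  have e : x t - x s = ∫ r in s..t, f r := by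
    rw [← intervalIntegral.integral_interval_sub_left (hi t ht) (hi s hs), hx t ht, hx s hs]
    ring
  rw [e, ← Real.norm_eq_abs]
  refine intervalIntegral.norm_integral_le_of_norm_le_const fun r hr => ?_
  refine hK r ?_
  exact uIcc_subset_Icc hs ht (uIoc_subset_uIcc hr)

/-- A priori bounds: the states of a feasible pair stay in the simplex `R + C + P = R0 + C0 + P0`
and are Lipschitz with a constant depending only on the data. -/
lemma Feasible.bounds {T lam1 lam2 a1 a2 M1 M2 R0 C0 P0 B G : ℝ}
    {beta gam u1 u2 R C P : ℝ → ℝ}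
    (hl1 : 0 ≤ lam1) (hl2 : 0 ≤ lam2) (ha1 : a1 ∈ Icc (0:ℝ) 1) (ha2 : a2 ∈ Icc (0:ℝ) 1)
    (hb : ContinuousOn beta (Icc 0 T)) (hg : ContinuousOn gam (Icc 0 T))
    (hbb : ∀ s ∈ Icc (0:ℝ) T, beta s ∈ Icc 0 B) (hgb : ∀ s ∈ Icc (0:ℝ) T, gam s ∈ Icc 0 G)
    (hR0 : 0 ≤ R0) (hC0 : 0 ≤ C0) (hP0 : 0 ≤ P0) (hN0 : 0 < R0 + C0 + P0)
    (h : Feasible T lam1 lam2 a1 a2 M1 M2 R0 C0 P0 beta gam u1 u2 R C P) :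
    (∀ t ∈ Icc (0:ℝ) T, R t + C t + P t = R0 + C0 + P0) ∧
    (∀ t ∈ Icc (0:ℝ) T, R t ∈ Icc 0 (R0 + C0 + P0) ∧ C t ∈ Icc 0 (R0 + C0 + P0) ∧
      P t ∈ Icc 0 (R0 + C0 + P0)) ∧
    ∀ s ∈ Icc (0:ℝ) T, ∀ t ∈ Icc (0:ℝ) T,
      |R t - R s| ≤ (lam1 + lam2 + 2 * G + M1 + (B + M2)) * (R0 + C0 + P0) * |t - s| ∧
      |C t - C s| ≤ (lam1 + lam2 + 2 * G + M1 + (B + M2)) * (R0 + C0 + P0) * |t - s| ∧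
      |P t - P s| ≤ (lam1 + lam2 + 2 * G + M1 + (B + M2)) * (R0 + C0 + P0) * |t - s| := by
  obtain ⟨hu1, hu2, hu1b, hu2b, hs, rfl, rfl, rfl⟩ := h
  have htot := hs.total_eq hb hg hu1 hu2 hu1b hu2b hN0
  have hnn := hs.nonneg hl1 hl2 ha1 ha2 hb hg hbb hgb hu1 hu2 hu1b hu2b hR0 hC0 hP0 hN0
  have hmem : ∀ t ∈ Icc (0:ℝ) T, R t ∈ Icc 0 (R 0 + C 0 + P 0) ∧ C t ∈ Icc 0 (R 0 + C 0 + P 0) ∧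
      P t ∈ Icc 0 (R 0 + C 0 + P 0) := by
    intro t ht
    obtain ⟨h1, h2, h3⟩ := hnn t ht
    have := htot t ht
    exact ⟨⟨h1, by linarith⟩, ⟨h2, by linarith⟩, ⟨h3, by linarith⟩⟩
  refine ⟨htot, hmem, fun s hs' t ht' => ?_⟩
  obtain ⟨hR, hC, hP, eR, eC, eP⟩ := hs
  obtain ⟨iR, iC, iP⟩ := integrableOn_rhs (lam1 := lam1) (lam2 := lam2) (a1 := a1) (a2 := a2)
    hu1 hu2 hu1b hu2b hb hg hR hC hP (fun s hs => by rw [htot s hs]; exact hN0.ne')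
  have hbd := fun r (hr : r ∈ Icc (0:ℝ) T) => abs_rhs_le (beta := beta) (gam := gam) (u1 := u1)
    (u2 := u2) (R := R) (C := C) (P := P) hl1 hl2 ha1 ha2 hN0 (hbb r hr)
    (hgb r hr) (hu1b r hr) (hu2b r hr) (hmem r hr).1 (hmem r hr).2.1 (hmem r hr).2.2 (htot r hr)
  exact ⟨abs_sub_le_of_integral_eq iR eR (fun r hr => (hbd r hr).1) hs' ht',
    abs_sub_le_of_integral_eq iC eC (fun r hr => (hbd r hr).2.1) hs' ht',
    abs_sub_le_of_integral_eq iP eP (fun r hr => (hbd r hr).2.2) hs' ht'⟩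

/-! ### The uncontrolled system -/

/-- The uncontrolled vector field, with the total frozen at `N0` and `b`, `g` standing for the
values of `β`, `γ`. -/
noncomputable def freeField (lam1 lam2 a2 N0 b g : ℝ) (x : ℝ × ℝ × ℝ) : ℝ × ℝ × ℝ :=
  (-lam2 * x.1 + lam1 * x.2.1 - g * x.1 + a2 * (b * (x.2.2 * x.1 / N0)),
   -lam1 * x.2.1 + lam2 * x.1 - g * x.2.1 + (1 - a2) * (b * (x.2.2 * x.1 / N0)),
   -(b * (x.2.2 * x.1 / N0)) + g * (x.1 + x.2.1))

/-- Truncation of each coordinate to `[0, N0]`. -/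
noncomputable def clamp3 (N0 : ℝ) (x : ℝ × ℝ × ℝ) : ℝ × ℝ × ℝ :=
  (max 0 (min N0 x.1), max 0 (min N0 x.2.1), max 0 (min N0 x.2.2))

lemma clamp_mem {N0 : ℝ} (h : 0 ≤ N0) (x : ℝ) : max 0 (min N0 x) ∈ Icc 0 N0 :=
  ⟨le_max_left _ _, max_le h (min_le_left _ _)⟩

lemma abs_clamp_sub_le (N0 x y : ℝ) : |max 0 (min N0 x) - max 0 (min N0 y)| ≤ |x - y| := by
  have h1 := abs_max_sub_max_le_abs (min N0 x) (min N0 y) 0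
  have h2 := abs_min_sub_min_le_max N0 x N0 y
  rw [sub_self, abs_zero, max_eq_right (abs_nonneg _)] at h2
  rw [max_comm 0, max_comm 0]
  exact h1.trans h2

/-- Lipschitz estimate for `freeField`, in terms of a common bound `d` for the coordinate
differences; the bounds on `x.1` and `y.2.2` are what the product term needs. -/
lemma freeField_sub_le {lam1 lam2 a2 N0 b g B G d : ℝ} {x y : ℝ × ℝ × ℝ}
    (hl1 : 0 ≤ lam1) (hl2 : 0 ≤ lam2) (ha2 : a2 ∈ Icc (0:ℝ) 1) (hN0 : 0 < N0)
    (hb : b ∈ Icc 0 B) (hg : g ∈ Icc 0 G)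
    (hx1 : x.1 ∈ Icc 0 N0) (hy3 : y.2.2 ∈ Icc 0 N0)
    (h1 : |x.1 - y.1| ≤ d) (h2 : |x.2.1 - y.2.1| ≤ d) (h3 : |x.2.2 - y.2.2| ≤ d) :
    ‖freeField lam1 lam2 a2 N0 b g x - freeField lam1 lam2 a2 N0 b g y‖
      ≤ (lam1 + lam2 + 2 * G + 2 * B) * d := by
  have hd : 0 ≤ d := (abs_nonneg _).trans h1
  have hlin : ∀ {k A z : ℝ}, 0 ≤ k → k ≤ A → |z| ≤ d → |k * z| ≤ A * d := by
    intro k A z hk hA hz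
    rw [abs_mul, abs_of_nonneg hk]
    exact mul_le_mul hA hz (abs_nonneg _) (hk.trans hA)
  have hq : |x.2.2 * x.1 / N0 - y.2.2 * y.1 / N0| ≤ 2 * d := by
    have e : x.2.2 * x.1 / N0 - y.2.2 * y.1 / N0
        = (x.2.2 - y.2.2) * (x.1 / N0) + (y.2.2 / N0) * (x.1 - y.1) := by ring
    have k1 : x.1 / N0 ∈ Icc (0:ℝ) 1 := ⟨div_nonneg hx1.1 hN0.le, (div_le_one hN0).2 hx1.2⟩
    have k2 : y.2.2 / N0 ∈ Icc (0:ℝ) 1 := ⟨div_nonneg hy3.1 hN0.le, (div_le_one hN0).2 hy3.2⟩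
    rw [e]
    have e1 := hlin k1.1 k1.2 h3
    have e2 := hlin k2.1 k2.2 h1
    rw [mul_comm (x.2.2 - y.2.2)]
    exact (abs_add_le _ _).trans (by linarith)
  set z := x.2.2 * x.1 / N0 - y.2.2 * y.1 / N0 with hz
  have hbz : |b * z| ≤ 2 * B * d := by
    rw [abs_mul, abs_of_nonneg hb.1]
    calc b * |z| ≤ B * (2 * d) := mul_le_mul hb.2 hq (abs_nonneg _) (hb.1.trans hb.2)
      _ = _ := by ring
  have hfr : ∀ {a : ℝ}, a ∈ Icc (0:ℝ) 1 → |a * (b * z)| ≤ 2 * B * d := by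
    intro a ha
    rw [abs_mul, abs_of_nonneg ha.1]
    nlinarith [ha.1, ha.2, abs_nonneg (b * z)]
  have t1 := abs_le.1 (hlin hl1 le_rfl h2)
  have t2 := abs_le.1 (hlin hl2 le_rfl h1)
  have t3 := abs_le.1 (hlin hg.1 hg.2 h1)
  have t4 := abs_le.1 (hlin hg.1 hg.2 h2)
  have t5 := abs_le.1 (hfr ha2)
  have t6 := abs_le.1 (hfr (a := 1 - a2) ⟨by linarith [ha2.2], by linarith [ha2.1]⟩)
  have t7 := abs_le.1 hbz
  have p1 := mul_nonneg hl1 hd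
  have p2 := mul_nonneg hl2 hd
  have p3 := mul_nonneg (hg.1.trans hg.2) hd
  have p4 := mul_nonneg (hb.1.trans hb.2) hd
  rw [hz] at t5 t6 t7
  simp only [freeField, Prod.norm_def, Prod.fst_sub, Prod.snd_sub, Real.norm_eq_abs]
  refine max_le ?_ (max_le ?_ ?_) <;> rw [abs_le] <;> constructor <;> linarith

/-- Without controls the initial value problem is solvable on all of `[0, T]`: Picard–Lindelöf
applies globally to the truncated field, whose solutions never leave the region where the
truncation is inactive. -/
lemma exists_free_solution {T lam1 lam2 a1 a2 B G R0 C0 P0 : ℝ} {beta gam : ℝ → ℝ}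
    (hT : 0 < T)
    (hl1 : 0 ≤ lam1) (hl2 : 0 ≤ lam2) (ha2 : a2 ∈ Icc (0:ℝ) 1)
    (hb : ContinuousOn beta (Icc 0 T)) (hg : ContinuousOn gam (Icc 0 T))
    (hbb : ∀ s ∈ Icc (0:ℝ) T, beta s ∈ Icc 0 B) (hgb : ∀ s ∈ Icc (0:ℝ) T, gam s ∈ Icc 0 G)
    (hR0 : 0 ≤ R0) (hC0 : 0 ≤ C0) (hP0 : 0 ≤ P0) (hN : 0 < R0 + C0 + P0) :
    ∃ R C P : ℝ → ℝ, IsSolution T lam1 lam2 a1 a2 beta gam (fun _ => 0) (fun _ => 0) R C P ∧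
      R 0 = R0 ∧ C 0 = C0 ∧ P 0 = P0 := by
  set N0 := R0 + C0 + P0 with hN0
  have h00 : (0:ℝ) ∈ Icc (0:ℝ) T := ⟨le_rfl, hT.le⟩
  have hB : 0 ≤ B := (hbb 0 h00).1.trans (hbb 0 h00).2
  have hG : 0 ≤ G := (hgb 0 h00).1.trans (hgb 0 h00).2
  set k : ℝ := lam1 + lam2 + 2 * G + 2 * B with hk
  have hk0 : 0 ≤ k := by positivity
  set f : ℝ → ℝ × ℝ × ℝ → ℝ × ℝ × ℝ :=
    fun t x => freeField lam1 lam2 a2 N0 (beta t) (gam t) (clamp3 N0 x) with hf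
  have hlip : ∀ t ∈ Icc (0:ℝ) T, LipschitzWith k.toNNReal (f t) := by
    intro t ht
    refine LipschitzWith.of_dist_le_mul fun x y => ?_
    rw [Real.coe_toNNReal _ hk0, dist_eq_norm, dist_eq_norm]
    refine freeField_sub_le hl1 hl2 ha2 hN (hbb t ht) (hgb t ht) (clamp_mem hN.le _)
      (clamp_mem hN.le _) ?_ ?_ ?_
    · exact (abs_clamp_sub_le _ _ _).trans (norm_fst_le (x - y))
    · exact (abs_clamp_sub_le _ _ _).trans
        ((norm_fst_le (x - y).2).trans (norm_snd_le (x - y)))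
    · exact (abs_clamp_sub_le _ _ _).trans
        ((norm_snd_le (x - y).2).trans (norm_snd_le (x - y)))
  have hbd : ∀ t ∈ Icc (0:ℝ) T, ∀ x, ‖f t x‖ ≤ k * N0 := by
    intro t ht x
    have h0 : freeField lam1 lam2 a2 N0 (beta t) (gam t) 0 = 0 := by simp [freeField]
    have hm : ∀ z : ℝ, |max 0 (min N0 z) - 0| ≤ N0 := fun z => by
      rw [sub_zero, abs_of_nonneg (clamp_mem hN.le z).1]; exact (clamp_mem hN.le z).2
    have := freeField_sub_le (x := clamp3 N0 x) (y := 0) (d := N0) hl1 hl2 ha2 hN (hbb t ht)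
      (hgb t ht) (clamp_mem hN.le _) ⟨le_rfl, hN.le⟩ (hm _) (hm _) (hm _)
    rwa [h0, sub_zero] at this
  have hPL : IsPicardLindelof f (tmin := 0) (tmax := T) ⟨0, h00⟩ (R0, C0, P0)
      ((k * N0).toNNReal * T.toNNReal) 0 (k * N0).toNNReal k.toNNReal :=
    { lipschitzOnWith := fun t ht => (hlip t ht).lipschitzOnWith
      continuousOn := fun x _ => by
        simp only [hf, freeField]
        fun_prop
      norm_le := fun t ht x _ => by
        rw [Real.coe_toNNReal _ (by positivity)]; exact hbd t ht x
      mul_max_le := by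
        simp [hT.le] }
  obtain ⟨α, hα0, hα⟩ := hPL.exists_eq_forall_mem_Icc_hasDerivWithinAt₀
  have hαc : ContinuousOn α (Icc 0 T) := fun t ht => (hα t ht).continuousWithinAt
  have hRc : ContinuousOn (fun t => (α t).1) (Icc 0 T) := hαc.fst
  have hCc : ContinuousOn (fun t => (α t).2.1) (Icc 0 T) := hαc.snd.fst
  have hPc : ContinuousOn (fun t => (α t).2.2) (Icc 0 T) := hαc.snd.snd
  have hfc : ContinuousOn (fun t => f t (α t)) (Icc 0 T) := by
    simp only [hf, freeField, clamp3]
    fun_prop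
  have hinteg : ∀ {y y' : ℝ → ℝ}, (∀ t ∈ Icc (0:ℝ) T, HasDerivWithinAt y (y' t) (Icc 0 T) t) →
      ContinuousOn y' (Icc 0 T) → ∀ t ∈ Icc (0:ℝ) T, y t = y 0 + ∫ s in (0:ℝ)..t, y' s := by
    intro y y' hy hy' t ht
    have hsub : Icc 0 t ⊆ Icc 0 T := Icc_subset_Icc_right ht.2
    rw [intervalIntegral.integral_eq_sub_of_hasDerivAt_of_le ht.1
      (fun s hs => ((hy s (hsub hs)).continuousWithinAt).mono hsub)
      (fun s hs => (hy s (hsub (Ioo_subset_Icc_self hs))).hasDerivAt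
        (Icc_mem_nhds hs.1 (hs.2.trans_le ht.2)))
      (ContinuousOn.intervalIntegrable (by rw [uIcc_of_le ht.1]; exact hy'.mono hsub))]
    ring
  have iR := hinteg (y := fun t => (α t).1) (y' := fun t => (f t (α t)).1)
    (fun t ht => (hα t ht).fst) hfc.fst
  have iC := hinteg (y := fun t => (α t).2.1) (y' := fun t => (f t (α t)).2.1)
    (fun t ht => (hα t ht).snd.fst) hfc.snd.fst
  have iP := hinteg (y := fun t => (α t).2.2) (y' := fun t => (f t (α t)).2.2)
    (fun t ht => (hα t ht).snd.snd) hfc.snd.snd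
  -- nonnegativity: each component of the field is nonnegative where that coordinate is negative
  have hnn : ∀ {y y' : ℝ → ℝ}, ContinuousOn y (Icc 0 T) → ContinuousOn y' (Icc 0 T) →
      (∀ t ∈ Icc (0:ℝ) T, y t = y 0 + ∫ s in (0:ℝ)..t, y' s) → 0 ≤ y 0 →
      (∀ s ∈ Icc (0:ℝ) T, y s < 0 → 0 ≤ y' s) → ∀ t ∈ Icc (0:ℝ) T, 0 ≤ y t := by
    intro y y' hy hy' hi h0 hs t ht
    have := negPart_le_mul_integral (K := 0) (w := fun _ => 0) le_rfl hy hy'.integrableOn_Icc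
      continuousOn_const (fun _ _ => le_rfl) hi h0 (fun s hs' hn => by
        have := hs s hs' hn; linarith) t ht
    have h2 := le_max_left (- y t) 0
    linarith
  have ha2' : 0 ≤ 1 - a2 := by linarith [ha2.2]
  have hcl : ∀ {z : ℝ}, z < 0 → max 0 (min N0 z) = 0 := fun {z} hz =>
    max_eq_left ((min_le_right _ _).trans hz.le)
  have hcn : ∀ z : ℝ, 0 ≤ max 0 (min N0 z) := fun z => le_max_left _ _
  have nR := hnn hRc hfc.fst iR (by rw [hα0]; exact hR0) (fun s hs hneg => by
    simp only [hf, freeField, clamp3, hcl hneg]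
    have := mul_nonneg hl1 (hcn (α s).2.1)
    simpa using this)
  have nC := hnn hCc hfc.snd.fst iC (by rw [hα0]; exact hC0) (fun s hs hneg => by
    simp only [hf, freeField, clamp3, hcl hneg]
    have h1 := mul_nonneg hl2 (hcn (α s).1)
    have h2 := mul_nonneg ha2' (mul_nonneg (hbb s hs).1
      (div_nonneg (mul_nonneg (hcn (α s).2.2) (hcn (α s).1)) hN.le))
    linarith)
  have nP := hnn hPc hfc.snd.snd iP (by rw [hα0]; exact hP0) (fun s hs hneg => by
    simp only [hf, freeField, clamp3, hcl hneg]
    have h1 := mul_nonneg (hgb s hs).1 (add_nonneg (hcn (α s).1) (hcn (α s).2.1))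
    simpa using h1)
  have hsum : ∀ t ∈ Icc (0:ℝ) T, (α t).1 + (α t).2.1 + (α t).2.2 = N0 := by
    intro t ht
    have hii : ∀ {y : ℝ → ℝ}, ContinuousOn y (Icc 0 T) → IntervalIntegrable y volume 0 t :=
      fun hy => ContinuousOn.intervalIntegrable
        (by rw [uIcc_of_le ht.1]; exact hy.mono (Icc_subset_Icc_right ht.2))
    have hz : (∫ s in (0:ℝ)..t, (f s (α s)).1) + (∫ s in (0:ℝ)..t, (f s (α s)).2.1)
        + (∫ s in (0:ℝ)..t, (f s (α s)).2.2) = 0 := by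
      rw [← intervalIntegral.integral_add (hii hfc.fst) (hii hfc.snd.fst),
        ← intervalIntegral.integral_add ((hii hfc.fst).add (hii hfc.snd.fst)) (hii hfc.snd.snd)]
      refine (intervalIntegral.integral_congr (g := fun _ => 0) fun s _ => ?_).trans (by simp)
      simp only [hf, freeField]; ring
    have e1 := iR t ht
    have e2 := iC t ht
    have e3 := iP t ht
    simp only [hα0] at e1 e2 e3
    linarith
  have hin : ∀ t ∈ Icc (0:ℝ) T, clamp3 N0 (α t) = α t := by
    intro t ht
    have h1 := nR t ht
    have h2 := nC t ht
    have h3 := nP t ht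
    have h4 := hsum t ht
    simp only [clamp3]
    rw [min_eq_right (by linarith), min_eq_right (by linarith), min_eq_right (by linarith),
      max_eq_right h1, max_eq_right h2, max_eq_right h3]
  refine ⟨fun t => (α t).1, fun t => (α t).2.1, fun t => (α t).2.2,
    ⟨hRc, hCc, hPc, fun t ht => ?_, fun t ht => ?_, fun t ht => ?_⟩,
    by simp [hα0], by simp [hα0], by simp [hα0]⟩
  · refine (iR t ht).trans (congrArg _ ?_)
    refine intervalIntegral.integral_congr fun s hs => ?_
    rw [uIcc_of_le ht.1] at hs
    have hs' : s ∈ Icc 0 T := ⟨hs.1, hs.2.trans ht.2⟩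
    simp only [hf, rhsR, hin s hs', hsum s hs', freeField]; ring
  · refine (iC t ht).trans (congrArg _ ?_)
    refine intervalIntegral.integral_congr fun s hs => ?_
    rw [uIcc_of_le ht.1] at hs
    have hs' : s ∈ Icc 0 T := ⟨hs.1, hs.2.trans ht.2⟩
    simp only [hf, rhsC, hin s hs', hsum s hs', freeField]; ring
  · refine (iP t ht).trans (congrArg _ ?_)
    refine intervalIntegral.integral_congr fun s hs => ?_
    rw [uIcc_of_le ht.1] at hs
    have hs' : s ∈ Icc 0 T := ⟨hs.1, hs.2.trans ht.2⟩
    simp only [hf, rhsP, hin s hs', hsum s hs', freeField]; ring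

open Filter Topology

/-! ### Compactness of controls and states -/

/-- Weak `L²(0, T)` convergence of `f n` to `φ` along the filter `l`. -/
def TendstoWeakly (T : ℝ) (l : Filter ℕ) (f : ℕ → ℝ → ℝ) (φ : ℝ → ℝ) : Prop :=
  ∀ g : ℝ → ℝ, MemLp g 2 (volume.restrict (Icc 0 T)) →
    Tendsto (fun n => ∫ s in Icc 0 T, f n s * g s) l (𝓝 (∫ s in Icc 0 T, φ s * g s))

/-- Controls with values in `[0, M]` are weakly compact in `L²`: Banach–Alaoglu gives a weak limit
along the ultrafilter, and testing against indicators shows that it again takes its values in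
`[0, M]` almost everywhere. -/
lemma exists_tendstoWeakly {T M : ℝ} (hM : 0 ≤ M) (l : Ultrafilter ℕ) (f : ℕ → ℝ → ℝ)
    (hf : ∀ n, Measurable (f n)) (hb : ∀ n, ∀ t ∈ Icc (0:ℝ) T, f n t ∈ Icc 0 M) :
    ∃ φ : ℝ → ℝ, Measurable φ ∧ (∀ t, φ t ∈ Icc 0 M) ∧ TendstoWeakly T l f φ := by
  set μ : Measure ℝ := volume.restrict (Icc 0 T) with hμ
  have hae : ∀ n, ∀ᵐ t ∂μ, ‖f n t‖ ≤ M := fun n =>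
    (ae_restrict_iff' measurableSet_Icc).2 (ae_of_all _ fun t ht => by
      rw [Real.norm_of_nonneg (hb n t ht).1]; exact (hb n t ht).2)
  have hmem : ∀ n, MemLp (f n) 2 μ := fun n =>
    MemLp.of_bound (hf n).aestronglyMeasurable M (hae n)
  set F : ℕ → Lp ℝ 2 μ := fun n => (hmem n).toLp (f n) with hF
  have hFn : ∃ r : ℝ, ∀ n, ‖F n‖ ≤ r := by
    refine ⟨_, fun n => Lp.norm_le_of_ae_bound hM ?_⟩
    filter_upwards [hae n, (hmem n).coeFn_toLp] with t h1 h2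
    rw [h2]; exact h1
  obtain ⟨r, hr⟩ := hFn
  have hcomp := WeakDual.isCompact_closedBall (𝕜 := ℝ) (E := Lp ℝ 2 μ) 0 r
  set Ψ : ℕ → WeakDual ℝ (Lp ℝ 2 μ) :=
    fun n => StrongDual.toWeakDual (InnerProductSpace.toDual ℝ (Lp ℝ 2 μ) (F n)) with hΨ
  obtain ⟨ψ, -, hψ⟩ := hcomp.ultrafilter_le_nhds (l.map Ψ) (by
    rw [le_principal_iff]
    refine Filter.mem_map.2 (Filter.univ_mem' fun n => ?_)
    simp only [mem_preimage, mem_closedBall_zero_iff, Ψ]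
    refine le_trans (le_of_eq ?_) (hr n)
    exact (InnerProductSpace.toDual ℝ (Lp ℝ 2 μ)).norm_map (F n))
  set φ0 : Lp ℝ 2 μ := (InnerProductSpace.toDual ℝ (Lp ℝ 2 μ)).symm (WeakDual.toStrongDual ψ)
    with hφ0
  have hinner : ∀ (a : Lp ℝ 2 μ) {g : ℝ → ℝ} (hg : MemLp g 2 μ),
      inner ℝ a (hg.toLp g) = ∫ s, a s * g s ∂μ := by
    intro a g hg
    rw [L2.inner_def]
    refine integral_congr_ae ?_
    filter_upwards [hg.coeFn_toLp] with s hs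
    rw [hs]
    simp [mul_comm]
  have hconv0 : ∀ g : ℝ → ℝ, MemLp g 2 μ →
      Tendsto (fun n => ∫ s, f n s * g s ∂μ) l (𝓝 (∫ s, φ0 s * g s ∂μ)) := by
    intro g hg
    have h1 : Tendsto (fun n => Ψ n (hg.toLp g)) l (𝓝 (ψ (hg.toLp g))) :=
      ((WeakDual.eval_continuous (hg.toLp g)).tendsto ψ).comp hψ
    have h2 : ψ (hg.toLp g) = ∫ s, φ0 s * g s ∂μ := by
      rw [← hinner φ0 hg, hφ0, InnerProductSpace.toDual_symm_apply]
      rfl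
    have h3 : ∀ n, Ψ n (hg.toLp g) = ∫ s, f n s * g s ∂μ := by
      intro n
      have : Ψ n (hg.toLp g) = inner ℝ (F n) (hg.toLp g) := rfl
      rw [this, hinner]
      refine integral_congr_ae ?_
      filter_upwards [(hmem n).coeFn_toLp] with s hs
      rw [hs]
    rw [h2] at h1
    simpa only [h3] using h1
  have hφi : Integrable φ0 μ := (Lp.memLp φ0).integrable (by norm_num)
  have hset : ∀ s : Set ℝ, MeasurableSet s →
      Tendsto (fun n => ∫ x in s, f n x ∂μ) l (𝓝 (∫ x in s, φ0 x ∂μ)) := by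
    intro s hs
    have hmi : MemLp (s.indicator fun _ => (1:ℝ)) 2 μ := (memLp_const 1).indicator hs
    have := hconv0 _ hmi
    have e : ∀ k : ℝ → ℝ, ∫ x, k x * s.indicator (fun _ => (1:ℝ)) x ∂μ = ∫ x in s, k x ∂μ := by
      intro k
      rw [← integral_indicator hs]
      refine integral_congr_ae (ae_of_all _ fun x => ?_)
      by_cases hx : x ∈ s <;> simp [hx]
    simpa only [e] using this
  have hfi : ∀ n, Integrable (f n) μ := fun n => (hmem n).integrable (by norm_num)
  have hnn : 0 ≤ᵐ[μ] φ0 := ae_nonneg_of_forall_setIntegral_nonneg hφi fun s hs _ =>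
    ge_of_tendsto' (hset s hs) fun n => by
      refine integral_nonneg_of_ae (ae_restrict_of_ae ?_)
      exact (ae_restrict_iff' measurableSet_Icc).2 (ae_of_all _ fun t ht => (hb n t ht).1)
  have hle : 0 ≤ᵐ[μ] fun x => M - φ0 x :=
    ae_nonneg_of_forall_setIntegral_nonneg ((integrable_const M).sub hφi) fun s hs _ => by
      have hlim : Tendsto (fun n => ∫ x in s, (M - f n x) ∂μ) l (𝓝 (∫ x in s, (M - φ0 x) ∂μ)) := by
        have e : ∀ k : ℝ → ℝ, Integrable k μ →
            ∫ x in s, (M - k x) ∂μ = (∫ x in s, M ∂μ) - ∫ x in s, k x ∂μ := fun k hk =>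
          integral_sub (integrable_const M) hk.integrableOn
        rw [e _ hφi]
        simp only [e _ (hfi _)]
        exact (hset s hs).const_sub _
      refine ge_of_tendsto' hlim fun n => ?_
      refine integral_nonneg_of_ae (ae_restrict_of_ae ?_)
      exact (ae_restrict_iff' measurableSet_Icc).2
        (ae_of_all _ fun t ht => sub_nonneg.2 (hb n t ht).2)
  refine ⟨fun t => max 0 (min M (φ0 t)), ?_, fun t => ⟨le_max_left _ _,
    max_le hM (min_le_left _ _)⟩, fun g hg => ?_⟩
  · exact measurable_const.max (measurable_const.min (Lp.stronglyMeasurable φ0).measurable)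
  · have : ∫ s, max 0 (min M (φ0 s)) * g s ∂μ = ∫ s, φ0 s * g s ∂μ := by
      refine integral_congr_ae ?_
      filter_upwards [hnn, hle] with s h1 h2
      have h1' : 0 ≤ φ0 s := h1
      have h2' : 0 ≤ M - φ0 s := h2
      rw [min_eq_right (by linarith), max_eq_right h1']
    rw [this]
    exact hconv0 g hg

/-- Arzelà–Ascoli along an ultrafilter. -/
lemma exists_tendsto_of_lipschitz {T N : ℝ} {L : NNReal} (l : Ultrafilter ℕ)
    (x : ℕ → C(Icc (0:ℝ) T, ℝ)) (hL : ∀ n, LipschitzWith L (x n))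
    (hb : ∀ n t, x n t ∈ Icc 0 N) : ∃ y : C(Icc (0:ℝ) T, ℝ), Tendsto x l (𝓝 y) := by
  set e := ContinuousMap.equivBoundedOfCompact (Icc (0:ℝ) T) ℝ
  have hcomp := BoundedContinuousFunction.arzela_ascoli (Icc 0 N) isCompact_Icc
    (range fun n => e (x n)) (by rintro f t ⟨n, rfl⟩; exact hb n t)
    (by
      refine (LipschitzWith.uniformEquicontinuous _ L ?_).equicontinuous
      rintro ⟨_, n, rfl⟩
      exact hL n)
  obtain ⟨y, -, hy⟩ := hcomp.ultrafilter_le_nhds (l.map fun n => e (x n)) (by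
    rw [le_principal_iff]
    exact Filter.mem_map.2 (Filter.univ_mem' fun n => subset_closure ⟨n, rfl⟩))
  refine ⟨e.symm y, ?_⟩
  have hc : Continuous e.symm := (ContinuousMap.isometryEquivBoundedOfCompact
    (Icc (0:ℝ) T) ℝ).symm.continuous
  have := (hc.tendsto y).comp (show Tendsto (fun n => e (x n)) l (𝓝 y) from hy)
  simpa [Function.comp_def] using this

/-- A weakly convergent sequence of controls times a uniformly convergent sequence of coefficients:
the integrals of the products converge. -/
lemma TendstoWeakly.integral_mul {T M : ℝ} (hT : 0 ≤ T) {l : Filter ℕ} {f : ℕ → ℝ → ℝ}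
    {φ : ℝ → ℝ} (hw : TendstoWeakly T l f φ) (hf : ∀ n, Measurable (f n))
    (hb : ∀ n, ∀ t ∈ Icc (0:ℝ) T, f n t ∈ Icc 0 M) {h : ℕ → C(Icc (0:ℝ) T, ℝ)}
    {k : C(Icc (0:ℝ) T, ℝ)} (hh : Tendsto h l (𝓝 k)) {t : ℝ} (ht : t ∈ Icc (0:ℝ) T) :
    Tendsto (fun n => ∫ s in (0:ℝ)..t, f n s * IccExtend hT (h n) s) l
      (𝓝 (∫ s in (0:ℝ)..t, φ s * IccExtend hT k s)) := by
  have hcE : ∀ y : C(Icc (0:ℝ) T, ℝ), Continuous (IccExtend hT y) := fun y =>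
    y.continuous.Icc_extend'
  have hsub : Icc 0 t ⊆ Icc 0 T := Icc_subset_Icc_right ht.2
  have hinteg : ∀ n (y : C(Icc (0:ℝ) T, ℝ)),
      IntervalIntegrable (fun s => f n s * IccExtend hT y s) volume 0 t := by
    intro n y
    have := integrableOn_affine (T := t) (u1 := f n) (u2 := f n) (h0 := fun _ => 0)
      (h1 := IccExtend hT y) (h2 := fun _ => 0) (M1 := M) (M2 := M) (hf n) (hf n)
      (fun s hs => hb n s (hsub hs)) (fun s hs => hb n s (hsub hs)) continuousOn_const
      (hcE y).continuousOn continuousOn_const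
    rw [← uIcc_of_le ht.1] at this
    simpa using this.intervalIntegrable
  have e : ∀ q : ℝ → ℝ, ∫ s in (0:ℝ)..t, q s * IccExtend hT k s =
      ∫ s in Icc 0 T, q s * (Ioc 0 t).indicator (IccExtend hT k) s := by
    intro q
    rw [intervalIntegral.integral_of_le ht.1]
    have : (fun s => q s * (Ioc 0 t).indicator (IccExtend hT k) s) =
        (Ioc 0 t).indicator fun s => q s * IccExtend hT k s := by
      funext s
      by_cases hs : s ∈ Ioc 0 t <;> simp [hs]
    rw [this, setIntegral_indicator measurableSet_Ioc,
      inter_eq_self_of_subset_right (Ioc_subset_Icc_self.trans hsub)]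
  have h1 : Tendsto (fun n => ∫ s in (0:ℝ)..t, f n s * IccExtend hT k s) l
      (𝓝 (∫ s in (0:ℝ)..t, φ s * IccExtend hT k s)) := by
    simp only [e]
    refine hw _ (MemLp.indicator measurableSet_Ioc ?_)
    refine MemLp.of_bound (hcE k).aestronglyMeasurable ‖k‖ (ae_of_all _ fun s => ?_)
    exact k.norm_coe_le_norm _
  have h2 : Tendsto (fun n => ∫ s in (0:ℝ)..t, f n s * IccExtend hT (h n - k) s) l (𝓝 0) := by
    have hz : Tendsto (fun n => M * ‖h n - k‖ * |t - 0|) l (𝓝 0) := by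
      have := (tendsto_iff_norm_sub_tendsto_zero.1 hh)
      simpa using (this.const_mul M).mul_const |t - 0|
    refine squeeze_zero_norm (fun n => ?_) hz
    refine intervalIntegral.norm_integral_le_of_norm_le_const fun s hs => ?_
    rw [uIoc_of_le ht.1] at hs
    have hs' := hb n s (hsub (Ioc_subset_Icc_self hs))
    rw [norm_mul, Real.norm_of_nonneg hs'.1]
    exact mul_le_mul hs'.2 ((h n - k).norm_coe_le_norm _) (norm_nonneg _) (hs'.1.trans hs'.2)
  have h3 := h2.add h1
  rw [zero_add] at h3
  refine h3.congr fun n => ?_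
  rw [← intervalIntegral.integral_add (hinteg n _) (hinteg n _)]
  refine intervalIntegral.integral_congr fun s _ => ?_
  simp only [IccExtend, Function.comp_apply, ContinuousMap.sub_apply]
  ring

lemma tendsto_integral_affine {T M1 M2 : ℝ} (hT : 0 ≤ T) {l : Filter ℕ} {u1 u2 : ℕ → ℝ → ℝ}
    {v1 v2 : ℝ → ℝ} (hw1 : TendstoWeakly T l u1 v1) (hw2 : TendstoWeakly T l u2 v2)
    (hu1 : ∀ n, Measurable (u1 n)) (hu2 : ∀ n, Measurable (u2 n))
    (hv1 : Measurable v1) (hv2 : Measurable v2)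
    (hb1 : ∀ n, ∀ t ∈ Icc (0:ℝ) T, u1 n t ∈ Icc 0 M1)
    (hb2 : ∀ n, ∀ t ∈ Icc (0:ℝ) T, u2 n t ∈ Icc 0 M2)
    (hvb1 : ∀ t, v1 t ∈ Icc 0 M1) (hvb2 : ∀ t, v2 t ∈ Icc 0 M2)
    {h0 h1 h2 : ℕ → C(Icc (0:ℝ) T, ℝ)} {k0 k1 k2 : C(Icc (0:ℝ) T, ℝ)}
    (hh0 : Tendsto h0 l (𝓝 k0)) (hh1 : Tendsto h1 l (𝓝 k1)) (hh2 : Tendsto h2 l (𝓝 k2))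
    {t : ℝ} (ht : t ∈ Icc (0:ℝ) T) :
    Tendsto (fun n => ∫ s in (0:ℝ)..t, (IccExtend hT (h0 n) s + u1 n s * IccExtend hT (h1 n) s
        + u2 n s * IccExtend hT (h2 n) s)) l
      (𝓝 (∫ s in (0:ℝ)..t, (IccExtend hT k0 s + v1 s * IccExtend hT k1 s
        + v2 s * IccExtend hT k2 s))) := by
  have hcE : ∀ y : C(Icc (0:ℝ) T, ℝ), Continuous (IccExtend hT y) := fun y =>
    y.continuous.Icc_extend'
  have hsub : Icc 0 t ⊆ Icc 0 T := Icc_subset_Icc_right ht.2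
  have hone : TendstoWeakly T l (fun _ _ => 1) (fun _ => 1) := fun g _ => tendsto_const_nhds
  have t0 := hone.integral_mul (M := 1) hT (fun _ => measurable_const)
    (fun _ _ _ => ⟨zero_le_one, le_rfl⟩) hh0 ht
  have t1 := hw1.integral_mul hT hu1 hb1 hh1 ht
  have t2 := hw2.integral_mul hT hu2 hb2 hh2 ht
  have hinteg : ∀ (q : ℝ → ℝ) (M : ℝ) (y : C(Icc (0:ℝ) T, ℝ)), Measurable q →
      (∀ s ∈ Icc (0:ℝ) T, q s ∈ Icc 0 M) →
      IntervalIntegrable (fun s => q s * IccExtend hT y s) volume 0 t := by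
    intro q M y hq hqb
    have := integrableOn_affine (T := t) (u1 := q) (u2 := q) (h0 := fun _ => 0)
      (h1 := IccExtend hT y) (h2 := fun _ => 0) (M1 := M) (M2 := M) hq hq
      (fun s hs => hqb s (hsub hs)) (fun s hs => hqb s (hsub hs)) continuousOn_const
      (hcE y).continuousOn continuousOn_const
    rw [← uIcc_of_le ht.1] at this
    simpa using this.intervalIntegrable
  have hsplit : ∀ (q1 q2 : ℝ → ℝ) (y0 y1 y2 : C(Icc (0:ℝ) T, ℝ)), Measurable q1 → Measurable q2 →
      (∀ s ∈ Icc (0:ℝ) T, q1 s ∈ Icc 0 M1) → (∀ s ∈ Icc (0:ℝ) T, q2 s ∈ Icc 0 M2) →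
      ∫ s in (0:ℝ)..t, (IccExtend hT y0 s + q1 s * IccExtend hT y1 s + q2 s * IccExtend hT y2 s)
      = (∫ s in (0:ℝ)..t, 1 * IccExtend hT y0 s) + (∫ s in (0:ℝ)..t, q1 s * IccExtend hT y1 s)
        + ∫ s in (0:ℝ)..t, q2 s * IccExtend hT y2 s := by
    intro q1 q2 y0 y1 y2 m1 m2 b1 b2
    have i0 : IntervalIntegrable (IccExtend hT y0) volume 0 t := (hcE y0).intervalIntegrable _ _
    simp only [one_mul]
    rw [intervalIntegral.integral_add (i0.add (hinteg q1 M1 y1 m1 b1)) (hinteg q2 M2 y2 m2 b2),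
      intervalIntegral.integral_add i0 (hinteg q1 M1 y1 m1 b1)]
  rw [hsplit v1 v2 k0 k1 k2 hv1 hv2 (fun s _ => hvb1 s) (fun s _ => hvb2 s)]
  simp only [hsplit _ _ _ _ _ (hu1 _) (hu2 _) (hb1 _) (hb2 _)]
  exact (t0.add t1).add t2

/-! ### Passage to the limit -/

/-- Weak lower semicontinuity of the cost, by the tangent inequality `u² ≥ 2uv - v²`. -/
lemma cost_le_of_tendsto {T k1 k2 k3 M1 M2 m : ℝ} (hT : 0 ≤ T) (hk2 : 0 ≤ k2) (hk3 : 0 ≤ k3)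
    {l : Filter ℕ} [l.NeBot] {u1 u2 : ℕ → ℝ → ℝ} {v1 v2 : ℝ → ℝ}
    (hw1 : TendstoWeakly T l u1 v1) (hw2 : TendstoWeakly T l u2 v2)
    (hu1 : ∀ n, Measurable (u1 n)) (hu2 : ∀ n, Measurable (u2 n))
    (hv1 : Measurable v1) (hv2 : Measurable v2)
    (hb1 : ∀ n, ∀ t ∈ Icc (0:ℝ) T, u1 n t ∈ Icc 0 M1)
    (hb2 : ∀ n, ∀ t ∈ Icc (0:ℝ) T, u2 n t ∈ Icc 0 M2)
    (hvb1 : ∀ t, v1 t ∈ Icc 0 M1) (hvb2 : ∀ t, v2 t ∈ Icc 0 M2)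
    {x : ℕ → C(Icc (0:ℝ) T, ℝ)} {y : C(Icc (0:ℝ) T, ℝ)} (hx : Tendsto x l (𝓝 y))
    (hm : Tendsto (fun n => cost T k1 k2 k3 (IccExtend hT (x n)) (u1 n) (u2 n)) l (𝓝 m)) :
    cost T k1 k2 k3 (IccExtend hT y) v1 v2 ≤ m := by
  have hcE : ∀ y : C(Icc (0:ℝ) T, ℝ), Continuous (IccExtend hT y) := fun y =>
    y.continuous.Icc_extend'
  set μ : Measure ℝ := volume.restrict (Icc 0 T) with hμ
  have hmem : ∀ {u : ℝ → ℝ} {M : ℝ}, Measurable u → (∀ t ∈ Icc (0:ℝ) T, u t ∈ Icc 0 M) →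
      MemLp u 2 μ := fun {u M} hu hb => MemLp.of_bound hu.aestronglyMeasurable M
    ((ae_restrict_iff' measurableSet_Icc).2 (ae_of_all _ fun t ht => by
      rw [Real.norm_of_nonneg (hb t ht).1]; exact (hb t ht).2))
  have m1 := fun n => hmem (hu1 n) (hb1 n)
  have m2 := fun n => hmem (hu2 n) (hb2 n)
  have n1 := hmem hv1 fun t _ => hvb1 t
  have n2 := hmem hv2 fun t _ => hvb2 t
  have iP : ∀ y : C(Icc (0:ℝ) T, ℝ), Integrable (fun s => k1 * IccExtend hT y s) μ :=
    fun y => ((hcE y).continuousOn.integrableOn_Icc).const_mul k1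
  have ecost : ∀ (p a b : ℝ → ℝ), cost T k1 k2 k3 p a b
      = ∫ s, (k1 * p s + k2 * a s ^ 2 + k3 * b s ^ 2) ∂μ := by
    intro p a b
    rw [cost, intervalIntegral.integral_of_le hT, ← integral_Icc_eq_integral_Ioc]
  have hsplit : ∀ (z : C(Icc (0:ℝ) T, ℝ)) (a b : ℝ → ℝ), MemLp a 2 μ → MemLp b 2 μ →
      ∫ s, (k1 * IccExtend hT z s + (2 * k2) * (a s * v1 s) + (2 * k3) * (b s * v2 s)) ∂μ =
      (∫ s, k1 * IccExtend hT z s ∂μ) + (2 * k2) * (∫ s, a s * v1 s ∂μ)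
        + (2 * k3) * ∫ s, b s * v2 s ∂μ := by
    intro z a b ha hb
    have j1 : Integrable (fun s => (2 * k2) * (a s * v1 s)) μ := (ha.integrable_mul n1).const_mul _
    have j2 : Integrable (fun s => (2 * k3) * (b s * v2 s)) μ := (hb.integrable_mul n2).const_mul _
    have j12 : Integrable (fun s => k1 * IccExtend hT z s + (2 * k2) * (a s * v1 s)) μ :=
      (iP z).add j1
    rw [integral_add j12 j2, integral_add (iP z) j1, integral_const_mul (2 * k2),
      integral_const_mul (2 * k3)]
  have hPlim : Tendsto (fun n => ∫ s, k1 * IccExtend hT (x n) s ∂μ) l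
      (𝓝 (∫ s, k1 * IccExtend hT y s ∂μ)) := by
    have hone : TendstoWeakly T l (fun _ _ => 1) (fun _ => 1) := fun g _ => tendsto_const_nhds
    have t0 := hone.integral_mul (M := 1) hT (fun _ => measurable_const)
      (fun _ _ _ => ⟨zero_le_one, le_rfl⟩) hx ⟨hT, le_rfl⟩
    simp only [one_mul, intervalIntegral.integral_of_le hT, ← integral_Icc_eq_integral_Ioc] at t0
    simp only [integral_const_mul]
    exact t0.const_mul k1
  set c := ∫ s, (k2 * v1 s ^ 2 + k3 * v2 s ^ 2) ∂μ with hc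
  have isq : ∀ {a b : ℝ → ℝ}, MemLp a 2 μ → MemLp b 2 μ →
      Integrable (fun s => k2 * a s ^ 2 + k3 * b s ^ 2) μ := fun ha hb =>
    (ha.integrable_sq.const_mul k2).add (hb.integrable_sq.const_mul k3)
  have hlim : Tendsto (fun n => ∫ s, (k1 * IccExtend hT (x n) s + (2 * k2) * (u1 n s * v1 s)
      + (2 * k3) * (u2 n s * v2 s)) ∂μ - c) l (𝓝 (∫ s, (k1 * IccExtend hT y s
      + (2 * k2) * (v1 s * v1 s) + (2 * k3) * (v2 s * v2 s)) ∂μ - c)) := by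
    rw [hsplit y v1 v2 n1 n2]
    simp only [hsplit _ _ _ (m1 _) (m2 _)]
    exact ((hPlim.add ((hw1 v1 n1).const_mul _)).add ((hw2 v2 n2).const_mul _)).sub_const c
  have i3 : ∀ (z : C(Icc (0:ℝ) T, ℝ)) {a b : ℝ → ℝ}, MemLp a 2 μ → MemLp b 2 μ →
      Integrable (fun s => k1 * IccExtend hT z s + (2 * k2) * (a s * v1 s)
        + (2 * k3) * (b s * v2 s)) μ := fun z a b ha hb =>
    ((iP z).add ((ha.integrable_mul n1).const_mul _)).add ((hb.integrable_mul n2).const_mul _)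
  have hval : ∫ s, (k1 * IccExtend hT y s + (2 * k2) * (v1 s * v1 s)
      + (2 * k3) * (v2 s * v2 s)) ∂μ - c = cost T k1 k2 k3 (IccExtend hT y) v1 v2 := by
    rw [ecost, hc, ← integral_sub (i3 y n1 n2) (isq n1 n2)]
    refine integral_congr_ae (ae_of_all _ fun s => ?_)
    ring
  rw [hval] at hlim
  refine le_of_tendsto_of_tendsto' hlim hm fun n => ?_
  rw [ecost, hc, ← integral_sub (i3 (x n) (m1 n) (m2 n)) (isq n1 n2)]
  refine integral_mono ((i3 (x n) (m1 n) (m2 n)).sub (isq n1 n2)) ?_ fun s => ?_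
  · have := (iP (x n)).add (isq (m1 n) (m2 n))
    refine this.congr (ae_of_all _ fun s => ?_)
    simp only [Pi.add_apply]; ring
  · have e1 := mul_nonneg hk2 (sq_nonneg (u1 n s - v1 s))
    have e2 := mul_nonneg hk3 (sq_nonneg (u2 n s - v2 s))
    simp only
    nlinarith

/-- The set of integral equations with fields affine in the controls is closed under uniform
convergence of the states and the coefficients and weak convergence of the controls. -/
lemma integral_eq_of_tendsto {T M1 M2 : ℝ} (hT : 0 ≤ T) {l : Filter ℕ} [l.NeBot]
    {u1 u2 : ℕ → ℝ → ℝ}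
    {v1 v2 : ℝ → ℝ} (hw1 : TendstoWeakly T l u1 v1) (hw2 : TendstoWeakly T l u2 v2)
    (hu1 : ∀ n, Measurable (u1 n)) (hu2 : ∀ n, Measurable (u2 n))
    (hv1 : Measurable v1) (hv2 : Measurable v2)
    (hb1 : ∀ n, ∀ t ∈ Icc (0:ℝ) T, u1 n t ∈ Icc 0 M1)
    (hb2 : ∀ n, ∀ t ∈ Icc (0:ℝ) T, u2 n t ∈ Icc 0 M2)
    (hvb1 : ∀ t, v1 t ∈ Icc 0 M1) (hvb2 : ∀ t, v2 t ∈ Icc 0 M2)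
    {h0 h1 h2 : ℕ → C(Icc (0:ℝ) T, ℝ)} {k0 k1 k2 : C(Icc (0:ℝ) T, ℝ)}
    (hh0 : Tendsto h0 l (𝓝 k0)) (hh1 : Tendsto h1 l (𝓝 k1)) (hh2 : Tendsto h2 l (𝓝 k2))
    {x f : ℕ → ℝ → ℝ} {xc : ℕ → C(Icc (0:ℝ) T, ℝ)} {y : C(Icc (0:ℝ) T, ℝ)} {g : ℝ → ℝ}
    (hxc : Tendsto xc l (𝓝 y)) (hx : ∀ n, ∀ s ∈ Icc (0:ℝ) T, x n s = IccExtend hT (xc n) s)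
    (he : ∀ n, ∀ t ∈ Icc (0:ℝ) T, x n t = x n 0 + ∫ s in (0:ℝ)..t, f n s)
    (hf : ∀ n, ∀ s ∈ Icc (0:ℝ) T, f n s = IccExtend hT (h0 n) s + u1 n s * IccExtend hT (h1 n) s
        + u2 n s * IccExtend hT (h2 n) s)
    (hg : ∀ s ∈ Icc (0:ℝ) T, g s = IccExtend hT k0 s + v1 s * IccExtend hT k1 s
        + v2 s * IccExtend hT k2 s) :
    ∀ t ∈ Icc (0:ℝ) T, IccExtend hT y t = IccExtend hT y 0 + ∫ s in (0:ℝ)..t, g s := by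
  intro t ht
  have hev : ∀ s, Tendsto (fun n => IccExtend hT (xc n) s) l (𝓝 (IccExtend hT y s)) := fun s =>
    ((continuous_eval_const (projIcc 0 T hT s)).tendsto y).comp hxc
  have hsub : uIcc 0 t ⊆ Icc 0 T := by
    rw [uIcc_of_le ht.1]; exact Icc_subset_Icc_right ht.2
  have hlim := (hev 0).add
    (tendsto_integral_affine hT hw1 hw2 hu1 hu2 hv1 hv2 hb1 hb2 hvb1 hvb2 hh0 hh1 hh2 ht)
  rw [intervalIntegral.integral_congr fun s hs => hg s (hsub hs)]
  refine tendsto_nhds_unique (hev t) (hlim.congr fun n => ?_)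
  rw [← intervalIntegral.integral_congr fun s hs => hf n s (hsub hs),
    ← hx n t ht, ← hx n 0 ⟨le_rfl, hT⟩]
  exact (he n t ht).symm

/-- On the simplex `R + C + P = N` the right-hand sides are affine in the controls, with
coefficients that are polynomials in the states. -/
lemma rhs_eq_affine {T lam1 lam2 a1 a2 N : ℝ} (hT : 0 ≤ T) {beta gam u1 u2 R C P : ℝ → ℝ}
    {b g x y z : C(Icc (0:ℝ) T, ℝ)}
    {s : ℝ} (hb : beta s = IccExtend hT b s) (hg : gam s = IccExtend hT g s)
    (hR : R s = IccExtend hT x s) (hC : C s = IccExtend hT y s) (hP : P s = IccExtend hT z s)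
    (hN : R s + C s + P s = N) :
    rhsR lam1 lam2 a1 a2 beta gam u1 u2 R C P s =
      IccExtend hT (lam1 • y - lam2 • x - g * x + (a2 / N) • (b * (z * x)) : C(Icc (0:ℝ) T, ℝ)) s
      + u1 s * IccExtend hT (a1 • z : C(Icc (0:ℝ) T, ℝ)) s
      + u2 s * IccExtend hT ((a2 / N) • (z * x) : C(Icc (0:ℝ) T, ℝ)) s ∧
    rhsC lam1 lam2 a1 a2 beta gam u1 u2 R C P s =
      IccExtend hT (lam2 • x - lam1 • y - g * y + ((1 - a2) / N) • (b * (z * x)) :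
        C(Icc (0:ℝ) T, ℝ)) s
      + u1 s * IccExtend hT ((1 - a1) • z : C(Icc (0:ℝ) T, ℝ)) s
      + u2 s * IccExtend hT (((1 - a2) / N) • (z * x) : C(Icc (0:ℝ) T, ℝ)) s ∧
    rhsP lam1 lam2 a1 a2 beta gam u1 u2 R C P s =
      IccExtend hT (g * (x + y) - (1 / N) • (b * (z * x)) : C(Icc (0:ℝ) T, ℝ)) s
      + u1 s * IccExtend hT ((-1 : ℝ) • z : C(Icc (0:ℝ) T, ℝ)) s
      + u2 s * IccExtend hT ((-1 / N) • (z * x) : C(Icc (0:ℝ) T, ℝ)) s := by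
  simp only [rhsR, rhsC, rhsP, hN]
  simp only [hb, hg, hR, hC, hP]
  simp only [IccExtend, Function.comp_apply, ContinuousMap.add_apply, ContinuousMap.sub_apply,
    ContinuousMap.mul_apply, ContinuousMap.smul_apply, smul_eq_mul]
  refine ⟨?_, ?_, ?_⟩ <;> ring

/-- Existence of an optimal control pair together with a corresponding solution of the
initial value problem, minimizing the cost over all feasible pairs. -/
theorem exists_optimal_control
    (t_f lam1 lam2 a1 a2 u1max u2max R0 C0 P0 k1 k2 k3 : ℝ)
    (ht_f : 0 < t_f)
    (hlam1 : 0 ≤ lam1) (hlam2 : 0 ≤ lam2)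
    (ha1 : a1 ∈ Icc (0:ℝ) 1) (ha2 : a2 ∈ Icc (0:ℝ) 1)
    (beta gam : ℝ → ℝ)
    (hbeta_cont : ContinuousOn beta (Icc 0 t_f))
    (hbeta_nonneg : ∀ t ∈ Icc (0:ℝ) t_f, 0 ≤ beta t)
    (hgam_cont : ContinuousOn gam (Icc 0 t_f))
    (hgam_nonneg : ∀ t ∈ Icc (0:ℝ) t_f, 0 ≤ gam t)
    (hu1max : 0 < u1max) (hu2max : 0 < u2max)
    (hk1 : 0 < k1) (hk2 : 0 < k2) (hk3 : 0 < k3)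
    (hR0 : 0 ≤ R0) (hC0 : 0 ≤ C0) (hP0 : 0 ≤ P0)
    (hN0 : 0 < R0 + C0 + P0) :
    ∃ Rs Cs Ps u1s u2s : ℝ → ℝ,
      Feasible t_f lam1 lam2 a1 a2 u1max u2max R0 C0 P0 beta gam u1s u2s Rs Cs Ps ∧
      ∀ R C P u1 u2 : ℝ → ℝ,
        Feasible t_f lam1 lam2 a1 a2 u1max u2max R0 C0 P0 beta gam u1 u2 R C P →
        cost t_f k1 k2 k3 Ps u1s u2s ≤ cost t_f k1 k2 k3 P u1 u2 := by
  set N0 := R0 + C0 + P0 with hN0def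
  have hT : (0:ℝ) ≤ t_f := ht_f.le
  obtain ⟨B, hB⟩ := isCompact_Icc.exists_bound_of_continuousOn hbeta_cont
  obtain ⟨G, hG⟩ := isCompact_Icc.exists_bound_of_continuousOn hgam_cont
  have hbb : ∀ s ∈ Icc (0:ℝ) t_f, beta s ∈ Icc 0 B := fun s hs =>
    ⟨hbeta_nonneg s hs, (le_abs_self _).trans (hB s hs)⟩
  have hgb : ∀ s ∈ Icc (0:ℝ) t_f, gam s ∈ Icc 0 G := fun s hs =>
    ⟨hgam_nonneg s hs, (le_abs_self _).trans (hG s hs)⟩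
  have hbounds := fun {u1 u2 R C P : ℝ → ℝ}
    (h : Feasible t_f lam1 lam2 a1 a2 u1max u2max R0 C0 P0 beta gam u1 u2 R C P) =>
    h.bounds hlam1 hlam2 ha1 ha2 hbeta_cont hgam_cont hbb hgb hR0 hC0 hP0 hN0
  set S : Set ℝ := {j | ∃ R C P u1 u2 : ℝ → ℝ,
    Feasible t_f lam1 lam2 a1 a2 u1max u2max R0 C0 P0 beta gam u1 u2 R C P ∧
    cost t_f k1 k2 k3 P u1 u2 = j} with hS
  have hSne : S.Nonempty := by
    obtain ⟨R, C, P, hs, e1, e2, e3⟩ := exists_free_solution (a1 := a1) ht_f hlam1 hlam2 ha2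
      hbeta_cont hgam_cont hbb hgb hR0 hC0 hP0 hN0
    exact ⟨_, R, C, P, fun _ => 0, fun _ => 0, ⟨measurable_const, measurable_const,
      fun _ _ => ⟨le_rfl, hu1max.le⟩, fun _ _ => ⟨le_rfl, hu2max.le⟩, hs, e1, e2, e3⟩, rfl⟩
  have hSbdd : BddBelow S := by
    refine ⟨0, ?_⟩
    rintro _ ⟨R, C, P, u1, u2, h, rfl⟩
    refine intervalIntegral.integral_nonneg hT fun t ht => ?_
    have := ((hbounds h).2.1 t ht).2.2.1
    positivity
  obtain ⟨j, -, hjlim, hjS⟩ := exists_seq_tendsto_sInf hSne hSbdd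
  choose R C P u1 u2 hfeas hcost using hjS
  set l : Ultrafilter ℕ := hyperfilter ℕ with hl
  have hjl : Tendsto j l (𝓝 (sInf S)) := hjlim.mono_left Nat.hyperfilter_le_atTop
  set L : ℝ := (lam1 + lam2 + 2 * G + u1max + (B + u2max)) * N0 with hL
  have hu1 := fun n => (hfeas n).1
  have hu2 := fun n => (hfeas n).2.1
  have hu1b := fun n => (hfeas n).2.2.1
  have hu2b := fun n => (hfeas n).2.2.2.1
  have hsol := fun n => (hfeas n).2.2.2.2.1
  have hini := fun n => (hfeas n).2.2.2.2.2
  have hcR := fun n => (hsol n).1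
  have hcC := fun n => (hsol n).2.1
  have hcP := fun n => (hsol n).2.2.1
  -- A sequence of states, restricted to `[0, t_f]`, has a uniform limit along the ultrafilter.
  have hstate : ∀ X : ℕ → ℝ → ℝ, (∀ n, ContinuousOn (X n) (Icc 0 t_f)) →
      (∀ n, ∀ t ∈ Icc (0:ℝ) t_f, X n t ∈ Icc 0 N0) →
      (∀ n, ∀ s ∈ Icc (0:ℝ) t_f, ∀ t ∈ Icc (0:ℝ) t_f, |X n t - X n s| ≤ L * |t - s|) →
      ∃ (x : ℕ → C(Icc (0:ℝ) t_f, ℝ)) (y : C(Icc (0:ℝ) t_f, ℝ)), Tendsto x l (𝓝 y) ∧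
        ∀ n, ∀ s ∈ Icc (0:ℝ) t_f, X n s = IccExtend hT (x n) s := by
    intro X hc hm hLip
    let x : ℕ → C(Icc (0:ℝ) t_f, ℝ) := fun n => ⟨(Icc (0:ℝ) t_f).domRestrict (X n), (hc n).domRestrict⟩
    obtain ⟨y, hy⟩ := exists_tendsto_of_lipschitz (L := L.toNNReal) (N := N0) l x
      (fun n => LipschitzWith.of_dist_le_mul fun s t => by
        refine (hLip n t t.2 s s.2).trans ?_
        exact mul_le_mul_of_nonneg_right (Real.le_coe_toNNReal L) (abs_nonneg _))
      (fun n t => hm n t t.2)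
    exact ⟨x, y, hy, fun n s hs => by rw [IccExtend_of_mem hT _ hs]; rfl⟩
  obtain ⟨x, xl, hx, ex⟩ := hstate R hcR (fun n t ht => ((hbounds (hfeas n)).2.1 t ht).1)
    (fun n s hs t ht => ((hbounds (hfeas n)).2.2 s hs t ht).1)
  obtain ⟨y, yl, hy, ey⟩ := hstate C hcC (fun n t ht => ((hbounds (hfeas n)).2.1 t ht).2.1)
    (fun n s hs t ht => ((hbounds (hfeas n)).2.2 s hs t ht).2.1)
  obtain ⟨z, zl, hz, ez⟩ := hstate P hcP (fun n t ht => ((hbounds (hfeas n)).2.1 t ht).2.2)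
    (fun n s hs t ht => ((hbounds (hfeas n)).2.2 s hs t ht).2.2)
  obtain ⟨v1, hv1, hvb1, hw1⟩ := exists_tendstoWeakly hu1max.le l u1 hu1 hu1b
  obtain ⟨v2, hv2, hvb2, hw2⟩ := exists_tendstoWeakly hu2max.le l u2 hu2 hu2b
  let b : C(Icc (0:ℝ) t_f, ℝ) := ⟨(Icc (0:ℝ) t_f).domRestrict beta, hbeta_cont.domRestrict⟩
  let g : C(Icc (0:ℝ) t_f, ℝ) := ⟨(Icc (0:ℝ) t_f).domRestrict gam, hgam_cont.domRestrict⟩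
  have eb : ∀ s ∈ Icc (0:ℝ) t_f, beta s = IccExtend hT b s := fun s hs => by
    rw [IccExtend_of_mem hT _ hs]; rfl
  have eg : ∀ s ∈ Icc (0:ℝ) t_f, gam s = IccExtend hT g s := fun s hs => by
    rw [IccExtend_of_mem hT _ hs]; rfl
  have hev : ∀ {w : ℕ → C(Icc (0:ℝ) t_f, ℝ)} {wl : C(Icc (0:ℝ) t_f, ℝ)}, Tendsto w l (𝓝 wl) →
      ∀ s, Tendsto (fun n => IccExtend hT (w n) s) l (𝓝 (IccExtend hT wl s)) := fun hw s =>
    ((continuous_eval_const (projIcc 0 t_f hT s)).tendsto _).comp hw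
  have h00 : (0:ℝ) ∈ Icc (0:ℝ) t_f := ⟨le_rfl, hT⟩
  have htot : ∀ s ∈ Icc (0:ℝ) t_f,
      IccExtend hT xl s + IccExtend hT yl s + IccExtend hT zl s = N0 := by
    intro s hs
    refine tendsto_nhds_unique (((hev hx s).add (hev hy s)).add (hev hz s))
      (tendsto_const_nhds.congr fun n => ?_)
    rw [← ex n s hs, ← ey n s hs, ← ez n s hs]
    exact ((hbounds (hfeas n)).1 s hs).symm
  have hseq := fun n s (hs : s ∈ Icc (0:ℝ) t_f) => rhs_eq_affine (lam1 := lam1) (lam2 := lam2)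
    (a1 := a1) (a2 := a2) (u1 := u1 n) (u2 := u2 n) hT (eb s hs) (eg s hs) (ex n s hs) (ey n s hs)
    (ez n s hs) ((hbounds (hfeas n)).1 s hs)
  have hlim := fun s (hs : s ∈ Icc (0:ℝ) t_f) => rhs_eq_affine (lam1 := lam1) (lam2 := lam2)
    (a1 := a1) (a2 := a2) (u1 := v1) (u2 := v2) (R := IccExtend hT xl) (C := IccExtend hT yl)
    (P := IccExtend hT zl) hT (eb s hs) (eg s hs) rfl rfl rfl (htot s hs)
  have hzx := hz.mul hx
  have hbzx := hzx.const_mul b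
  have hcE : ∀ w : C(Icc (0:ℝ) t_f, ℝ), ContinuousOn (IccExtend hT w) (Icc 0 t_f) := fun w =>
    (w.continuous.Icc_extend').continuousOn
  refine ⟨IccExtend hT xl, IccExtend hT yl, IccExtend hT zl, v1, v2,
    ⟨hv1, hv2, fun t _ => hvb1 t, fun t _ => hvb2 t,
      ⟨hcE xl, hcE yl, hcE zl, ?_, ?_, ?_⟩, ?_, ?_, ?_⟩, ?_⟩
  · exact integral_eq_of_tendsto hT hw1 hw2 hu1 hu2 hv1 hv2 hu1b hu2b hvb1 hvb2
      ((((hy.const_smul lam1).sub (hx.const_smul lam2)).sub (hx.const_mul g)).add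
        (hbzx.const_smul (a2 / N0)))
      (hz.const_smul a1) (hzx.const_smul (a2 / N0)) hx ex (fun n => (hsol n).2.2.2.1)
      (fun n s hs => (hseq n s hs).1) (fun s hs => (hlim s hs).1)
  · exact integral_eq_of_tendsto hT hw1 hw2 hu1 hu2 hv1 hv2 hu1b hu2b hvb1 hvb2
      ((((hx.const_smul lam2).sub (hy.const_smul lam1)).sub (hy.const_mul g)).add
        (hbzx.const_smul ((1 - a2) / N0)))
      (hz.const_smul (1 - a1)) (hzx.const_smul ((1 - a2) / N0)) hy ey
      (fun n => (hsol n).2.2.2.2.1)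
      (fun n s hs => (hseq n s hs).2.1) (fun s hs => (hlim s hs).2.1)
  · exact integral_eq_of_tendsto hT hw1 hw2 hu1 hu2 hv1 hv2 hu1b hu2b hvb1 hvb2
      (((hx.add hy).const_mul g).sub (hbzx.const_smul (1 / N0)))
      (hz.const_smul (-1 : ℝ)) (hzx.const_smul (-1 / N0)) hz ez (fun n => (hsol n).2.2.2.2.2)
      (fun n s hs => (hseq n s hs).2.2) (fun s hs => (hlim s hs).2.2)
  · exact tendsto_nhds_unique (hev hx 0)
      (tendsto_const_nhds.congr fun n => by rw [← ex n 0 h00, (hini n).1])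
  · exact tendsto_nhds_unique (hev hy 0)
      (tendsto_const_nhds.congr fun n => by rw [← ey n 0 h00, (hini n).2.1])
  · exact tendsto_nhds_unique (hev hz 0)
      (tendsto_const_nhds.congr fun n => by rw [← ez n 0 h00, (hini n).2.2])
  · intro R' C' P' u1' u2' h'
    refine (cost_le_of_tendsto (m := sInf S) hT hk2.le hk3.le hw1 hw2 hu1 hu2 hv1 hv2 hu1b hu2b
      hvb1 hvb2 hz (hjl.congr fun n => ?_)).trans (csInf_le hSbdd ⟨R', C', P', u1', u2', h', rfl⟩)
    rw [← hcost n]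
    refine intervalIntegral.integral_congr fun s hs => ?_
    rw [uIcc_of_le hT] at hs
    simp only [ez n s hs]
end
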